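/- arXiv:1609.08568 — 8 statements merged into one kernel-verified Lean document; each statement's English description precedes it below -/
import Mathlib

section
/- Fix H ∈ (0, 1/2) and d ∈ (−2H, ∞). The function λ_d, defined by λ_d(ρ) = ∫_{η_d}^{ρ} (d + 2H cosh r)/√(sinh² r − (d + 2H cosh r)²) dr for ρ ≥ η_d, is strictly increasing on [η_d, ∞) and satisfies lim_{ρ→∞} λ_d(ρ) = ∞. -/
open MeasureTheory

/-- Inverse hyperbolic cosine: the inverse of `cosh` restricted to `[1, ∞)`. -/
noncomputable def arcosh (x : ℝ) : ℝ := Real.log (x + Real.sqrt (x ^ 2 - 1))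

/-- The neck parameter `η_d` of the `H`-catenoid `𝒞^H_d`. -/
noncomputable def eta (H d : ℝ) : ℝ :=
  arcosh ((2 * d * H + Real.sqrt (1 - 4 * H ^ 2 + d ^ 2)) / (1 - 4 * H ^ 2))

/-- The height function `λ_d(ρ)` of the generating curve of the `H`-catenoid. -/
noncomputable def lam (H d ρ : ℝ) : ℝ :=
  ∫ r in eta H d..ρ,
    (d + 2 * H * Real.cosh r) /
      Real.sqrt (Real.sinh r ^ 2 - (d + 2 * H * Real.cosh r) ^ 2)


theorem stmt_7_bounds (H d : ℝ) (hH0 : 0 < H) (hH : H < 1 / 2) (hd : -2 * H < d) :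
    ∃ c : ℝ, 0 < c ∧ 0 < eta H d ∧ ∀ r, eta H d < r →
      c * (r - eta H d) ≤ Real.sinh r ^ 2 - (d + 2 * H * Real.cosh r) ^ 2 := by
  have ha : 0 < 1 - 4 * H ^ 2 := by nlinarith
  set s := Real.sqrt (1 - 4 * H ^ 2 + d ^ 2) with hs
  have hs2 : s ^ 2 = 1 - 4 * H ^ 2 + d ^ 2 := Real.sq_sqrt (by positivity)
  have hs0 : 0 < s := Real.sqrt_pos.2 (by positivity)
  set x := (2 * d * H + s) / (1 - 4 * H ^ 2) with hx
  have hax : (1 - 4 * H ^ 2) * x = 2 * d * H + s := by rw [hx]; field_simp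
  have hx1 : 1 < x := by
    rw [hx, lt_div_iff₀ ha]
    have h1 : (1 - 4 * H ^ 2 - 2 * d * H) ^ 2 < s ^ 2 := by
      rw [hs2]
      have : 0 < (1 - 4 * H ^ 2) * (d + 2 * H) ^ 2 := mul_pos ha (pow_pos (by linarith) 2)
      nlinarith
    have := lt_of_pow_lt_pow_left₀ 2 hs0.le h1
    linarith
  have he : eta H d = Real.arcosh x := rfl
  have hpos : 0 < eta H d := by rw [he]; exact Real.arcosh_pos hx1
  have hc : Real.cosh (eta H d) = x := by rw [he]; exact Real.cosh_arcosh hx1.le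
  have hsh : 0 < Real.sinh (eta H d) := Real.sinh_pos_iff.2 hpos
  refine ⟨Real.sinh (eta H d) * (2 * s), by positivity, hpos, fun r hr => ?_⟩
  have hcv : Real.sinh (eta H d) * (r - eta H d) ≤ Real.cosh r - x := by
    have h1 : Real.cosh r = Real.cosh (eta H d) * Real.cosh (r - eta H d)
        + Real.sinh (eta H d) * Real.sinh (r - eta H d) := by
      rw [← Real.cosh_add]; congr 1; ring
    have h2 : r - eta H d ≤ Real.sinh (r - eta H d) :=
      Real.self_le_sinh_iff.2 (by linarith)
    have h3 := Real.one_le_cosh (r - eta H d)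
    rw [h1, hc]
    nlinarith [mul_le_mul_of_nonneg_left h2 hsh.le]
  have hcx : 0 ≤ Real.cosh r - x := le_trans (mul_nonneg hsh.le (by linarith)) hcv
  rw [Real.sinh_sq]
  set C := Real.cosh r
  have hid : C ^ 2 - 1 - (d + 2 * H * C) ^ 2
      = (C - x) * ((1 - 4 * H ^ 2) * (C - x) + 2 * s) := by
    have : (1 - 4 * H ^ 2) * (C ^ 2 - 1 - (d + 2 * H * C) ^ 2)
      = (1 - 4 * H ^ 2) * ((C - x) * ((1 - 4 * H ^ 2) * (C - x) + 2 * s)) := by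
      have : s = (1 - 4 * H ^ 2) * x - 2 * d * H := by linarith
      rw [this] at hs2 ⊢
      linear_combination hs2
    exact mul_left_cancel₀ ha.ne' this
  rw [hid]
  calc _ = (Real.sinh (eta H d) * (r - eta H d)) * (2 * s) := by ring
    _ ≤ (C - x) * (2 * s) := by gcongr
    _ ≤ _ := by
      gcongr
      have := mul_nonneg ha.le hcx
      linarith

theorem stmt_7 (H d : ℝ) (hH0 : 0 < H) (hH : H < 1 / 2) (hd : -2 * H < d) :
    StrictMonoOn (lam H d) (Set.Ici (eta H d)) ∧
    Filter.Tendsto (lam H d) Filter.atTop Filter.atTop := by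
  obtain ⟨c, hc, hη, hb⟩ := stmt_7_bounds H d hH0 hH hd
  set f : ℝ → ℝ := fun r => (d + 2 * H * Real.cosh r) /
      Real.sqrt (Real.sinh r ^ 2 - (d + 2 * H * Real.cosh r) ^ 2) with hf
  have hnum : ∀ r, 0 < d + 2 * H * Real.cosh r := fun r => by
    have := Real.one_le_cosh r
    nlinarith
  have hint : ∀ ρ, eta H d ≤ ρ → IntervalIntegrable f volume (eta H d) ρ := by
    intro ρ hρ
    have hg : IntervalIntegrable (fun r => (d + 2 * H * Real.cosh ρ) / Real.sqrt c *
        (r - eta H d) ^ (-(1/2) : ℝ)) volume (eta H d) ρ := by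
      apply IntervalIntegrable.const_mul
      have h0 : IntervalIntegrable (fun x : ℝ => x ^ (-(1/2) : ℝ)) volume 0 (ρ - eta H d) :=
        intervalIntegral.intervalIntegrable_rpow' (by norm_num)
      simpa using h0.comp_sub_right (eta H d)
    refine hg.mono_fun' ?_ ?_
    · apply Measurable.aestronglyMeasurable
      rw [hf]
      fun_prop
    · rw [Set.uIoc_of_le hρ]
      refine (ae_restrict_iff' measurableSet_Ioc).2 (Filter.Eventually.of_forall fun r hr => ?_)
      have h1 := hb r hr.1
      have h2 : 0 < r - eta H d := sub_pos.2 hr.1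
      have h3 : Real.cosh r ≤ Real.cosh ρ := by
        rw [Real.cosh_le_cosh, abs_of_pos (by linarith [hr.1]), abs_of_pos (by linarith [hr.1, hr.2])]
        exact hr.2
      have h4 : 0 ≤ f r := div_nonneg (hnum r).le (Real.sqrt_nonneg _)
      beta_reduce
      rw [Real.norm_of_nonneg h4, Real.rpow_neg h2.le, ← Real.sqrt_eq_rpow,
        ← div_eq_mul_inv, div_div, ← Real.sqrt_mul hc.le]
      have := hnum ρ
      have : 0 < Real.sqrt (c * (r - eta H d)) := Real.sqrt_pos.2 (by positivity)
      simp only [hf]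
      gcongr
  obtain ⟨m, hm, hm1, hm2⟩ : ∃ m : ℝ, 0 < m ∧ m ≤ 2 * H ∧ m ≤ d + 2 * H :=
    ⟨min (2 * H) (d + 2 * H), lt_min (by linarith) (by linarith), min_le_left _ _, min_le_right _ _⟩
  have hlow : ∀ r, eta H d < r → m ≤ f r := by
    intro r hr
    have h1 := hb r hr
    have h2 : 0 < Real.sinh r ^ 2 - (d + 2 * H * Real.cosh r) ^ 2 :=
      lt_of_lt_of_le (mul_pos hc (sub_pos.2 hr)) h1
    have h3 : Real.sqrt (Real.sinh r ^ 2 - (d + 2 * H * Real.cosh r) ^ 2) ≤ Real.cosh r := by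
      rw [Real.sqrt_le_left (Real.cosh_pos r).le]
      rw [Real.sinh_sq]
      nlinarith [sq_nonneg (d + 2 * H * Real.cosh r)]
    simp only [hf]
    rw [le_div_iff₀ (Real.sqrt_pos.2 h2)]
    have h5 := Real.one_le_cosh r
    calc _ ≤ m * Real.cosh r := by gcongr
      _ ≤ _ := by nlinarith
  have key : ∀ ρ σ, eta H d ≤ ρ → ρ ≤ σ → m * (σ - ρ) ≤ lam H d σ - lam H d ρ := by
    intro ρ σ h1 h2
    have hi : IntervalIntegrable f volume ρ σ := (hint ρ h1).symm.trans (hint σ (h1.trans h2))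
    have e : lam H d σ - lam H d ρ = ∫ r in ρ..σ, f r :=
      intervalIntegral.integral_interval_sub_left (hint σ (h1.trans h2)) (hint ρ h1)
    rw [e]
    have := intervalIntegral.integral_mono_on_of_le_Ioo h2
      (intervalIntegrable_const (c := m)) hi (fun x hx => hlow x (lt_of_le_of_lt h1 hx.1))
    rw [intervalIntegral.integral_const, smul_eq_mul] at this
    linarith
  constructor
  · intro ρ h1 σ _ h2
    have := key ρ σ h1 h2.le
    have := mul_pos hm (sub_pos.2 h2)
    linarith
  · have ht : Filter.Tendsto (fun σ => m * (σ - eta H d) + lam H d (eta H d))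
        Filter.atTop Filter.atTop := by
      apply Filter.tendsto_atTop_add_const_right
      apply Filter.Tendsto.const_mul_atTop hm
      exact Filter.tendsto_atTop_add_const_right _ _ Filter.tendsto_id
    refine Filter.tendsto_atTop_mono' _ ?_ ht
    filter_upwards [Filter.eventually_ge_atTop (eta H d)] with σ hσ
    have := key _ σ le_rfl hσ
    linarith
end

section
/- Fix H ∈ (0, 1/2) and d ∈ (−2H, ∞). For every ρ ≥ η_d, ∫_{η_d}^{ρ} 2H sinh r/√(sinh² r − (d + 2H cosh r)²) dr = (2H/√(1 − 4H²)) · arcosh( ((1 − 4H²) cosh ρ − 2dH)/√(d² + 1 − 4H²) ). -/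
open MeasureTheory

theorem arcosh_eq_real (x : ℝ) : arcosh x = Real.arcosh x := rfl

theorem stmt_10 (H d : ℝ) (hH0 : 0 < H) (hH : H < 1 / 2) (hd : -2 * H < d) :
    ∀ ρ : ℝ, eta H d ≤ ρ →
      (∫ r in eta H d..ρ,
          2 * H * Real.sinh r /
            Real.sqrt (Real.sinh r ^ 2 - (d + 2 * H * Real.cosh r) ^ 2)) =
        2 * H / Real.sqrt (1 - 4 * H ^ 2) *
          arcosh (((1 - 4 * H ^ 2) * Real.cosh ρ - 2 * d * H) /
            Real.sqrt (d ^ 2 + 1 - 4 * H ^ 2)) := by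
  intro ρ hρ
  have e1 : d ^ 2 + 1 - 4 * H ^ 2 = 1 - 4 * H ^ 2 + d ^ 2 := by ring
  rw [e1, arcosh_eq_real]
  have ha : 0 < 1 - 4 * H ^ 2 := by nlinarith
  obtain ⟨a, hadef⟩ : ∃ a, a = 1 - 4 * H ^ 2 := ⟨_, rfl⟩
  have hη : eta H d = Real.arcosh ((2 * d * H + Real.sqrt (a + d ^ 2)) / a) := by
    rw [hadef]; rfl
  rw [← hadef] at ha ⊢
  have hS2 : 0 < a + d ^ 2 := by positivity
  obtain ⟨S, hSdef⟩ : ∃ S, S = Real.sqrt (a + d ^ 2) := ⟨_, rfl⟩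
  have hS : 0 < S := by rw [hSdef]; exact Real.sqrt_pos.2 hS2
  have hSS : S ^ 2 = a + d ^ 2 := by rw [hSdef]; exact Real.sq_sqrt hS2.le
  rw [← hSdef] at hη ⊢
  have hc0 : 1 ≤ (2 * d * H + S) / a := by
    rw [le_div_iff₀ ha]
    have h2 : (a - 2 * d * H) ^ 2 ≤ S ^ 2 := by
      have h3 : S ^ 2 - (a - 2 * d * H) ^ 2 = a * (d + 2 * H) ^ 2 := by
        rw [hSS, hadef]; ring
      nlinarith [mul_nonneg ha.le (sq_nonneg (d + 2 * H))]
    have := abs_le_of_sq_le_sq h2 hS.le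
    linarith [(abs_le.1 this).2]
  have hη0 : 0 ≤ eta H d := by rw [hη]; exact Real.arcosh_nonneg hc0
  have hcη : Real.cosh (eta H d) = (2 * d * H + S) / a := by rw [hη]; exact Real.cosh_arcosh hc0
  have huη : (a * Real.cosh (eta H d) - 2 * d * H) / S = 1 := by
    rw [hcη]; field_simp; ring
  have hu1 : ∀ r, eta H d ≤ r → 1 ≤ (a * Real.cosh r - 2 * d * H) / S := by
    intro r hr
    rw [← huη]
    have : Real.cosh (eta H d) ≤ Real.cosh r := by
      rw [Real.cosh_le_cosh, abs_of_nonneg hη0, abs_of_nonneg (hη0.trans hr)]; exact hr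
    gcongr
  have hu2 : ∀ r, eta H d < r → 1 < (a * Real.cosh r - 2 * d * H) / S := by
    intro r hr
    rw [← huη]
    have : Real.cosh (eta H d) < Real.cosh r := by
      rw [Real.cosh_lt_cosh, abs_of_nonneg hη0, abs_of_nonneg (hη0.trans hr.le)]; exact hr
    gcongr
  have hcont : ContinuousOn (fun r => 2 * H / Real.sqrt a *
      Real.arcosh ((a * Real.cosh r - 2 * d * H) / S)) (Set.Icc (eta H d) ρ) := by
    apply ContinuousOn.mul continuousOn_const
    refine Real.continuousOn_arcosh.comp (Continuous.continuousOn ?_) (fun r hr => hu1 r hr.1)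
    have := Real.continuous_cosh
    fun_prop
  have hder : ∀ r ∈ Set.Ioo (eta H d) ρ, HasDerivAt (fun r => 2 * H / Real.sqrt a *
      Real.arcosh ((a * Real.cosh r - 2 * d * H) / S))
      (2 * H * Real.sinh r /
            Real.sqrt (Real.sinh r ^ 2 - (d + 2 * H * Real.cosh r) ^ 2)) r := by
    intro r hr
    have hu := hu2 r hr.1
    have h1 : HasDerivAt (fun r => (a * Real.cosh r - 2 * d * H) / S) (a * Real.sinh r / S) r :=
      (((Real.hasDerivAt_cosh r).const_mul a).sub_const _).div_const S
    have h2 := ((Real.hasDerivAt_arcosh (Set.mem_Ioi.2 hu)).comp r h1).const_mul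
      (2 * H / Real.sqrt a)
    refine h2.congr_deriv ?_
    have key : ((a * Real.cosh r - 2 * d * H) / S) ^ 2 - 1 =
        a * (Real.sinh r ^ 2 - (d + 2 * H * Real.cosh r) ^ 2) / S ^ 2 := by
      rw [div_pow, div_sub_one (by positivity)]
      congr 1
      rw [hSS, Real.sinh_sq, hadef]; ring
    have hpos : 0 < a * (Real.sinh r ^ 2 - (d + 2 * H * Real.cosh r) ^ 2) / S ^ 2 := by
      rw [← key]; nlinarith
    have hQ : 0 < Real.sinh r ^ 2 - (d + 2 * H * Real.cosh r) ^ 2 := by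
      rw [div_pos_iff_of_pos_right (by positivity)] at hpos
      exact (mul_pos_iff_of_pos_left ha).1 hpos
    rw [key, Real.sqrt_div (by positivity), Real.sqrt_sq hS.le, Real.sqrt_mul ha.le]
    have hq := Real.sqrt_pos.2 hQ
    have hsa := Real.sqrt_pos.2 ha
    have hsq := Real.sq_sqrt ha.le
    generalize Real.sqrt (Real.sinh r ^ 2 - (d + 2 * H * Real.cosh r) ^ 2) = q at *
    generalize Real.sqrt a = b at *
    rw [← hsq]
    field_simp
  have hint : IntervalIntegrable (fun r => 2 * H * Real.sinh r /
      Real.sqrt (Real.sinh r ^ 2 - (d + 2 * H * Real.cosh r) ^ 2)) volume (eta H d) ρ := by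
    rw [intervalIntegrable_iff_integrableOn_Ioc_of_le hρ]
    refine intervalIntegral.integrableOn_deriv_of_nonneg hcont hder ?_
    intro r hr
    have : 0 ≤ Real.sinh r := Real.sinh_nonneg_iff.2 (hη0.trans hr.1.le)
    positivity
  rw [intervalIntegral.integral_eq_sub_of_hasDerivAt_of_le hρ hcont hder hint]
  simp only [huη, Real.arcosh_zero, mul_zero, sub_zero]
end

section
/- Fix H ∈ (0, 1/2) and d ∈ (−2H, ∞), and let f_d(ρ) = ∫_{η_d}^{ρ} 2H sinh r/√(sinh² r − (d + 2H cosh r)²) dr. Then lim_{ρ→∞} [ f_d(ρ) − (2H/√(1 − 4H²)) · ( ρ + ln( (1 − 4H²)/√(d² + 1 − 4H²) ) ) ] = 0. -/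
open MeasureTheory

/-- The function `f_d(ρ)`, the part of `λ_d` coming from the `2H sinh r` term. -/
noncomputable def fF (H d ρ : ℝ) : ℝ :=
  ∫ r in eta H d..ρ,
    2 * H * Real.sinh r /
      Real.sqrt (Real.sinh r ^ 2 - (d + 2 * H * Real.cosh r) ^ 2)

theorem aux_eta_one (H d : ℝ) (hc : 0 < 1 - 4 * H ^ 2) (hd : -2 * H < d) :
    1 < (2 * d * H + Real.sqrt (1 - 4 * H ^ 2 + d ^ 2)) / (1 - 4 * H ^ 2) := by
  rw [lt_div_iff₀ hc]
  have h : 1 - 4 * H ^ 2 - 2 * d * H < Real.sqrt (1 - 4 * H ^ 2 + d ^ 2) := by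
    apply Real.lt_sqrt_of_sq_lt
    have h2 : 0 < (1 - 4 * H ^ 2) * (d + 2 * H) ^ 2 := by
      apply mul_pos hc; apply pow_pos; linarith
    nlinarith
  linarith

theorem aux_limit (c b s : ℝ) (hc : 0 < c) :
    Filter.Tendsto (fun ρ : ℝ =>
      ((c * Real.cosh ρ - b) + Real.sqrt ((c * Real.cosh ρ - b) ^ 2 - s ^ 2)) * Real.exp (-ρ) / c)
      Filter.atTop (nhds 1) := by
  have he : Filter.Tendsto (fun ρ : ℝ => Real.exp (-ρ)) Filter.atTop (nhds 0) :=
    Real.tendsto_exp_neg_atTop_nhds_zero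
  let g : ℝ → ℝ := fun t => ((c * ((1 + t ^ 2) / 2) - b * t) +
    Real.sqrt ((c * ((1 + t ^ 2) / 2) - b * t) ^ 2 - s ^ 2 * t ^ 2)) / c
  have hg : Continuous g := by fun_prop
  have h0 : g 0 = 1 := by
    have : Real.sqrt ((c / 2) ^ 2) = c / 2 := Real.sqrt_sq (by positivity)
    simp only [g]
    norm_num
    have e : c * (1 / 2) = c / 2 := by ring
    rw [e, this]
    field_simp
    try norm_num
  have h := (hg.tendsto 0).comp he
  rw [h0] at h
  refine h.congr fun ρ => ?_
  simp only [g, Function.comp]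
  have hE : Real.exp ρ * Real.exp (-ρ) = 1 := by rw [← Real.exp_add]; simp
  have hu : c * ((1 + Real.exp (-ρ) ^ 2) / 2) - b * Real.exp (-ρ)
      = (c * Real.cosh ρ - b) * Real.exp (-ρ) := by
    rw [Real.cosh_eq]
    linear_combination (-c / 2) * hE
  rw [hu, ← mul_pow, ]
  have : ((c * Real.cosh ρ - b) * Real.exp (-ρ)) ^ 2 - (s * Real.exp (-ρ)) ^ 2
      = ((c * Real.cosh ρ - b) ^ 2 - s ^ 2) * Real.exp (-ρ) ^ 2 := by ring
  rw [this, Real.sqrt_mul' _ (by positivity), Real.sqrt_sq (Real.exp_pos _).le]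
  ring

theorem aux_integral (H d ρ : ℝ) (hH0 : 0 < H) (hc : 0 < 1 - 4 * H ^ 2) (hd : -2 * H < d)
    (hρ : eta H d ≤ ρ) (s : ℝ) (hs : s = Real.sqrt (1 - 4 * H ^ 2 + d ^ 2)) :
    0 < ((1 - 4 * H ^ 2) * Real.cosh ρ - 2 * H * d) ∧
    fF H d ρ = 2 * H / Real.sqrt (1 - 4 * H ^ 2) *
      (Real.log (((1 - 4 * H ^ 2) * Real.cosh ρ - 2 * H * d) +
        Real.sqrt (((1 - 4 * H ^ 2) * Real.cosh ρ - 2 * H * d) ^ 2 - s ^ 2)) - Real.log s) := by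
  have hx1 := aux_eta_one H d hc hd
  have hcosh : Real.cosh (eta H d) = (2 * d * H + s) / (1 - 4 * H ^ 2) := by
    rw [hs]; exact Real.cosh_arcosh hx1.le
  have heta : 0 < eta H d := Real.arcosh_pos hx1
  have hs2 : s ^ 2 = 1 - 4 * H ^ 2 + d ^ 2 := by rw [hs]; exact Real.sq_sqrt (by positivity)
  have hs0 : 0 < s := by rw [hs]; apply Real.sqrt_pos.2; positivity
  set c := 1 - 4 * H ^ 2 with hcdef
  have hueta : c * Real.cosh (eta H d) - 2 * H * d = s := by
    rw [hcosh]; field_simp; ring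
  have hule : ∀ r, eta H d ≤ r → s ≤ c * Real.cosh r - 2 * H * d := by
    intro r hr
    have : Real.cosh (eta H d) ≤ Real.cosh r := by
      rw [Real.cosh_le_cosh, abs_of_pos heta, abs_of_pos (by linarith)]; exact hr
    nlinarith
  have hult : ∀ r, eta H d < r → s < c * Real.cosh r - 2 * H * d := by
    intro r hr
    have : Real.cosh (eta H d) < Real.cosh r := by
      rw [Real.cosh_lt_cosh, abs_of_pos heta, abs_of_pos (by linarith)]; exact hr
    nlinarith
  refine ⟨by linarith [hule ρ hρ], ?_⟩
  let F : ℝ → ℝ := fun r => 2 * H / Real.sqrt c *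
    Real.log ((c * Real.cosh r - 2 * H * d) + Real.sqrt ((c * Real.cosh r - 2 * H * d) ^ 2 - s ^ 2))
  have hFc : ContinuousOn F (Set.Icc (eta H d) ρ) := by
    apply ContinuousOn.mul continuousOn_const
    apply ContinuousOn.log
    · have := Real.continuous_cosh
      fun_prop
    · intro r hr
      have := hule r hr.1
      have := Real.sqrt_nonneg ((c * Real.cosh r - 2 * H * d) ^ 2 - s ^ 2)
      linarith
  have hFd : ∀ r ∈ Set.Ioo (eta H d) ρ, HasDerivAt F (2 * H * Real.sinh r /
      Real.sqrt (Real.sinh r ^ 2 - (d + 2 * H * Real.cosh r) ^ 2)) r := by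
    intro r hr
    have hu := hult r hr.1
    have hpos : 0 < (c * Real.cosh r - 2 * H * d) ^ 2 - s ^ 2 := by nlinarith
    have hQ : (c * Real.cosh r - 2 * H * d) ^ 2 - s ^ 2
        = c * (Real.sinh r ^ 2 - (d + 2 * H * Real.cosh r) ^ 2) := by
      rw [hs2, Real.sinh_sq, hcdef]; ring
    have hQpos : 0 < Real.sinh r ^ 2 - (d + 2 * H * Real.cosh r) ^ 2 := by
      rw [hQ] at hpos; exact (mul_pos_iff_of_pos_left hc).1 hpos
    have hU : HasDerivAt (fun r => c * Real.cosh r - 2 * H * d) (c * Real.sinh r) r :=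
      ((Real.hasDerivAt_cosh r).const_mul c).sub_const _
    have hS := ((hU.pow 2).sub_const (s ^ 2)).sqrt hpos.ne'
    have hw := Real.sqrt_pos.2 hpos
    have hL := ((hU.add hS).log (by simp only [Pi.add_apply, Pi.pow_apply]; linarith)).const_mul (2 * H / Real.sqrt c)
    refine hL.congr_deriv ?_
    simp only [Pi.add_apply, Pi.pow_apply]
    have hsq : Real.sqrt ((c * Real.cosh r - 2 * H * d) ^ 2 - s ^ 2) = Real.sqrt c *
        Real.sqrt (Real.sinh r ^ 2 - (d + 2 * H * Real.cosh r) ^ 2) := by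
      rw [hQ, Real.sqrt_mul hc.le]
    have ha := Real.sqrt_pos.2 hc
    have hq := Real.sqrt_pos.2 hQpos
    have ha2 := Real.sq_sqrt hc.le
    rw [hsq] at hw ⊢
    generalize Real.sqrt (Real.sinh r ^ 2 - (d + 2 * H * Real.cosh r) ^ 2) = q at *
    generalize c * Real.cosh r - 2 * H * d = u at *
    generalize Real.sqrt c = a at *
    have hne : u + a * q ≠ 0 := by linarith
    rw [← ha2]
    field_simp
    push_cast
    ring
  have hint : IntervalIntegrable (fun r => 2 * H * Real.sinh r /
      Real.sqrt (Real.sinh r ^ 2 - (d + 2 * H * Real.cosh r) ^ 2)) volume (eta H d) ρ := by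
    apply intervalIntegral.intervalIntegrable_deriv_of_nonneg (g := F)
    · rwa [Set.uIcc_of_le hρ]
    · rwa [min_eq_left hρ, max_eq_right hρ]
    · rw [min_eq_left hρ, max_eq_right hρ]
      intro r hr
      have : 0 ≤ Real.sinh r := Real.sinh_nonneg_iff.2 (by linarith [hr.1])
      positivity
  have := intervalIntegral.integral_eq_sub_of_hasDerivAt_of_le hρ hFc hFd hint
  unfold fF
  rw [this]
  simp only [F]
  rw [hueta]
  simp
  ring

theorem stmt_11 (H d : ℝ) (hH0 : 0 < H) (hH : H < 1 / 2) (hd : -2 * H < d) :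
    Filter.Tendsto
      (fun ρ : ℝ =>
        fF H d ρ -
          2 * H / Real.sqrt (1 - 4 * H ^ 2) *
            (ρ + Real.log ((1 - 4 * H ^ 2) / Real.sqrt (d ^ 2 + 1 - 4 * H ^ 2))))
      Filter.atTop (nhds 0) := by
  have hc : 0 < 1 - 4 * H ^ 2 := by nlinarith
  have hs : d ^ 2 + 1 - 4 * H ^ 2 = 1 - 4 * H ^ 2 + d ^ 2 := by ring
  rw [hs]
  have hs0 : 0 < Real.sqrt (1 - 4 * H ^ 2 + d ^ 2) := by apply Real.sqrt_pos.2; positivity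
  have h1 := aux_limit (1 - 4 * H ^ 2) (2 * H * d) (Real.sqrt (1 - 4 * H ^ 2 + d ^ 2)) hc
  have h2 := (h1.log one_ne_zero).const_mul (2 * H / Real.sqrt (1 - 4 * H ^ 2))
  rw [Real.log_one, mul_zero] at h2
  refine h2.congr' ?_
  filter_upwards [Filter.eventually_ge_atTop (eta H d)] with ρ hρ
  obtain ⟨hu, hf⟩ := aux_integral H d ρ hH0 hc hd hρ _ rfl
  rw [hf]
  have hw := Real.sqrt_nonneg (((1 - 4 * H ^ 2) * Real.cosh ρ - 2 * H * d) ^ 2 -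
    Real.sqrt (1 - 4 * H ^ 2 + d ^ 2) ^ 2)
  have hp := add_pos_of_pos_of_nonneg hu hw
  rw [Real.log_div (mul_pos hp (Real.exp_pos _)).ne' hc.ne',
    Real.log_mul hp.ne' (Real.exp_pos _).ne', Real.log_exp, Real.log_div hc.ne' hs0.ne']
  ring
end

section
/- For every real α > 1, the improper integral ∫_{arcosh α}^{∞} dr/√(cosh r − α) converges and satisfies ∫_{arcosh α}^{∞} dr/√(cosh r − α) < π/√(α − 1). -/
open MeasureTheory

theorem stmt_13 (α : ℝ) (hα : 1 < α) :
    IntegrableOn (fun r : ℝ => 1 / Real.sqrt (Real.cosh r - α)) (Set.Ioi (arcosh α)) volume ∧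
    (∫ r in Set.Ioi (arcosh α), 1 / Real.sqrt (Real.cosh r - α)) <
      Real.pi / Real.sqrt (α - 1) := by
  have hc : Real.cosh (arcosh α) = α := Real.cosh_arcosh hα.le
  have ha : 0 < arcosh α := Real.arcosh_pos hα
  set a := arcosh α with hadef
  have hb : 0 < Real.sqrt (α - 1) := Real.sqrt_pos.2 (by linarith)
  have hb2 : Real.sqrt (α - 1) ^ 2 = α - 1 := Real.sq_sqrt (by linarith)
  set b := Real.sqrt (α - 1) with hbdef
  have hcosh : ∀ r ∈ Set.Ioi a, 0 < Real.cosh r - α := by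
    intro r hr
    have hr' : a < r := hr
    have h : Real.cosh a < Real.cosh r := by
      rw [Real.cosh_lt_cosh, abs_of_pos ha, abs_of_pos (ha.trans hr')]
      exact hr'
    linarith
  let g : ℝ → ℝ := fun r => 2 / b * Real.arctan (Real.sqrt (Real.cosh r - α) / b)
  let g' : ℝ → ℝ := fun r => Real.sinh r / ((Real.cosh r - 1) * Real.sqrt (Real.cosh r - α))
  have hgc : Continuous g := by
    have := Real.continuous_cosh
    fun_prop
  have hderiv : ∀ r ∈ Set.Ioi a, HasDerivAt g (g' r) r := by
    intro r hr
    have h0 := hcosh r hr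
    have ht : 0 < Real.sqrt (Real.cosh r - α) := Real.sqrt_pos.2 h0
    have ht2 : Real.sqrt (Real.cosh r - α) ^ 2 = Real.cosh r - α := Real.sq_sqrt h0.le
    have h1 := (((((Real.hasDerivAt_cosh r).sub_const α).sqrt h0.ne').div_const b).arctan).const_mul (2 / b)
    refine HasDerivAt.congr_deriv h1 ?_
    change _ = Real.sinh r / ((Real.cosh r - 1) * Real.sqrt (Real.cosh r - α))
    have e : Real.cosh r - 1 = Real.sqrt (Real.cosh r - α) ^ 2 + b ^ 2 := by rw [ht2, hb2]; ring
    rw [e]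
    have : 0 < b ^ 2 + Real.sqrt (Real.cosh r - α) ^ 2 := by positivity
    field_simp
    ring
  have hlt : ∀ r ∈ Set.Ioi a, 1 / Real.sqrt (Real.cosh r - α) < g' r := by
    intro r hr
    have h0 := hcosh r hr
    have ht : 0 < Real.sqrt (Real.cosh r - α) := Real.sqrt_pos.2 h0
    have hs : Real.cosh r - 1 < Real.sinh r := by
      have h1 := Real.cosh_sub_sinh r
      have h2 : Real.exp (-r) < 1 := by
        have : a < r := hr
        rw [← Real.exp_zero, Real.exp_lt_exp]
        linarith
      linarith
    have h3 : 0 < Real.cosh r - 1 := by linarith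
    simp only [g']
    rw [div_lt_div_iff₀ ht (by positivity)]
    nlinarith
  have hnn : ∀ r ∈ Set.Ioi a, 0 ≤ g' r := fun r hr =>
    le_trans (by positivity) (hlt r hr).le
  have hct : Filter.Tendsto Real.cosh Filter.atTop Filter.atTop := by
    refine Filter.tendsto_atTop_mono (f := fun r => Real.exp r / 2) (fun r => ?_)
      (Real.tendsto_exp_atTop.atTop_div_const (by norm_num))
    rw [Real.cosh_eq]
    have := Real.exp_pos (-r)
    linarith
  have hlim : Filter.Tendsto g Filter.atTop (nhds (Real.pi / b)) := by
    have h1 : Filter.Tendsto (fun r => Real.sqrt (Real.cosh r - α) / b) Filter.atTop Filter.atTop :=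
      (Real.tendsto_sqrt_atTop.comp
        (Filter.tendsto_atTop_add_const_right _ (-α) hct)).atTop_div_const hb
    have h2 := ((Real.tendsto_arctan_atTop.mono_right nhdsWithin_le_nhds).comp h1).const_mul (2 / b)
    have e : Real.pi / b = 2 / b * (Real.pi / 2) := by ring
    rw [e]
    exact h2
  have hint' : IntegrableOn g' (Set.Ioi a) :=
    integrableOn_Ioi_deriv_of_nonneg hgc.continuousWithinAt hderiv hnn hlim
  have hval : ∫ r in Set.Ioi a, g' r = Real.pi / b := by
    rw [integral_Ioi_of_hasDerivAt_of_nonneg hgc.continuousWithinAt hderiv hnn hlim]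
    simp [g, hc]
  have hint : IntegrableOn (fun r : ℝ => 1 / Real.sqrt (Real.cosh r - α)) (Set.Ioi a) volume := by
    refine Integrable.mono' hint' ?_ ?_
    · have := Real.measurable_cosh
      exact Measurable.aestronglyMeasurable (by fun_prop)
    · refine (ae_restrict_mem measurableSet_Ioi).mono fun r hr => ?_
      rw [Real.norm_of_nonneg (by positivity)]
      exact (hlt r hr).le
  refine ⟨hint, ?_⟩
  rw [← hval, ← sub_pos, ← integral_sub hint' hint]
  rw [setIntegral_pos_iff_support_of_nonneg_ae
    ((ae_restrict_mem measurableSet_Ioi).mono fun r hr => (sub_pos.2 (hlt r hr)).le)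
    (hint'.sub hint)]
  have hsub : Set.Ioi a ⊆ Function.support fun r => g' r - 1 / Real.sqrt (Real.cosh r - α) :=
    fun r hr => (sub_pos.2 (hlt r hr)).ne'
  rw [Set.inter_eq_right.2 hsub]
  simp
end

section
/- Fix H ∈ (0, 1/2). For every d > 2 and every ρ ∈ (η_d, ∞), J_d(ρ) := ∫_{η_d}^{ρ} (d + 2H e^{−r})/√(sinh² r − (d + 2H cosh r)²) dr < 2π√(1 − 2H). In particular sup over d ∈ (2, ∞) and ρ ∈ (η_d, ∞) of J_d(ρ) is at most 2π√(1 − 2H). -/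
open MeasureTheory

/-- The remainder integral `J_d(ρ)` in the decomposition `λ_d = f_d + J_d`. -/
noncomputable def JF (H d ρ : ℝ) : ℝ :=
  ∫ r in eta H d..ρ,
    (d + 2 * H * Real.exp (-r)) /
      Real.sqrt (Real.sinh r ^ 2 - (d + 2 * H * Real.cosh r) ^ 2)

theorem stmt_14 (H : ℝ) (hH0 : 0 < H) (hH : H < 1 / 2) :
    ∀ d : ℝ, 2 < d → ∀ ρ : ℝ, eta H d < ρ →
      JF H d ρ < 2 * Real.pi * Real.sqrt (1 - 2 * H) := by
  intro d hd ρ hρ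
  have hpos : 0 < 2 * Real.pi * Real.sqrt (1 - 2 * H) := by
    have : 0 < 1 - 2 * H := by linarith
    positivity
  have hq : 0 < 1 - 4 * H ^ 2 := by nlinarith
  obtain ⟨C, hC⟩ : ∃ C, C = (2 * d * H + Real.sqrt (1 - 4 * H ^ 2 + d ^ 2)) / (1 - 4 * H ^ 2) :=
    ⟨_, rfl⟩
  have hS : d < Real.sqrt (1 - 4 * H ^ 2 + d ^ 2) := Real.lt_sqrt_of_sq_lt (by linarith)
  have hSS : Real.sqrt (1 - 4 * H ^ 2 + d ^ 2) ^ 2 = 1 - 4 * H ^ 2 + d ^ 2 :=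
    Real.sq_sqrt (by positivity)
  have hCq : C * (1 - 4 * H ^ 2) = 2 * d * H + Real.sqrt (1 - 4 * H ^ 2 + d ^ 2) := by
    rw [hC, div_mul_cancel₀ _ hq.ne']
  have hdH : 0 < d * H := by positivity
  have hC1 : 1 < C := by
    rw [hC, lt_div_iff₀ hq]; nlinarith
  have heta : eta H d = Real.arcosh C := by
    rw [hC]; rfl
  have heta0 : 0 < eta H d := by
    rw [heta]; exact Real.arcosh_pos hC1
  have hcosh : Real.cosh (eta H d) = C := by
    rw [heta]; exact Real.cosh_arcosh hC1.le
  have hsinh : ∀ r, eta H d ≤ r → 0 < Real.sinh r := fun r hr =>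
    Real.sinh_pos_iff.2 (lt_of_lt_of_le heta0 hr)
  have key : ∀ r, eta H d < r → (d + 2 * H * Real.cosh r) ^ 2 < Real.sinh r ^ 2 := by
    intro r hr
    have h1 : C < Real.cosh r := by
      rw [← hcosh, Real.cosh_lt_cosh, abs_of_pos heta0, abs_of_pos (heta0.trans hr)]
      exact hr
    have h2 : C * (1 - 4 * H ^ 2) < Real.cosh r * (1 - 4 * H ^ 2) := by gcongr
    rw [hCq] at h2
    have h3 : Real.sqrt (1 - 4 * H ^ 2 + d ^ 2) ^ 2
        < (Real.cosh r * (1 - 4 * H ^ 2) - 2 * d * H) ^ 2 := by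
      apply pow_lt_pow_left₀ (by linarith) (by positivity) (by norm_num)
    rw [hSS] at h3
    rw [Real.sinh_sq]
    have h4 : 0 < (1 - 4 * H ^ 2) *
        (Real.cosh r ^ 2 - 1 - (d + 2 * H * Real.cosh r) ^ 2) := by nlinarith
    have := (mul_pos_iff_of_pos_left hq).1 h4
    linarith
  set f : ℝ → ℝ := fun r => (d + 2 * H * Real.exp (-r)) /
      Real.sqrt (Real.sinh r ^ 2 - (d + 2 * H * Real.cosh r) ^ 2) with hf
  set w : ℝ → ℝ := fun r => (d + 2 * H * Real.cosh r) / Real.sinh r with hw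
  by_cases hfint : IntervalIntegrable f volume (eta H d) ρ
  swap
  · have : JF H d ρ = 0 := intervalIntegral.integral_undef hfint
    rw [this]; exact hpos
  have hfIcc : IntegrableOn f (Set.Icc (eta H d) ρ) := by
    rw [integrableOn_Icc_iff_integrableOn_Ioc]
    exact (intervalIntegrable_iff_integrableOn_Ioc_of_le hρ.le).1 hfint
  have hw1 : ∀ r, eta H d < r → 0 < 1 - w r ^ 2 := by
    intro r hr
    have hs := hsinh r hr.le
    have := key r hr
    have : w r ^ 2 < 1 := by
      rw [hw]; simp only
      rw [div_pow, div_lt_one (by positivity)]; exact this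
    linarith
  have hwd : ∀ r, eta H d < r →
      HasDerivAt w (-(2 * H + d * Real.cosh r) / Real.sinh r ^ 2) r := by
    intro r hr
    have hs := hsinh r hr.le
    have h := (((Real.hasDerivAt_cosh r).const_mul (2 * H)).const_add d).div
      (Real.hasDerivAt_sinh r) hs.ne'
    refine HasDerivAt.congr_deriv (f := w) h ?_
    have := Real.cosh_sq r
    congr 1
    linear_combination (-2 * H) * this
  have hcont : ContinuousOn (fun r => Real.arccos (w r)) (Set.Icc (eta H d) ρ) := by
    apply Real.continuous_arccos.comp_continuousOn
    apply ContinuousOn.div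
    · exact (continuous_const.add (continuous_const.mul Real.continuous_cosh)).continuousOn
    · exact Real.continuous_sinh.continuousOn
    · intro x hx; exact (hsinh x hx.1).ne'
  have hle : JF H d ρ ≤ Real.arccos (w ρ) - Real.arccos (w (eta H d)) := by
    refine intervalIntegral.integral_le_sub_of_hasDeriv_right_of_le hρ.le hcont
      (g' := fun r => -(1 / Real.sqrt (1 - w r ^ 2)) *
        (-(2 * H + d * Real.cosh r) / Real.sinh r ^ 2)) ?_ hfIcc ?_
    · intro x hx
      have h1 := hw1 x hx.1
      exact ((Real.hasDerivAt_arccos (by nlinarith) (by nlinarith)).comp x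
        (hwd x hx.1)).hasDerivWithinAt
    · intro x hx
      have h1 := hw1 x hx.1
      have hs := hsinh x hx.1.le
      have e : Real.sinh x ^ 2 - (d + 2 * H * Real.cosh x) ^ 2
          = Real.sinh x ^ 2 * (1 - w x ^ 2) := by
        rw [hw]; field_simp
      have hq2 : 0 < Real.sqrt (1 - w x ^ 2) := Real.sqrt_pos.2 h1
      show (d + 2 * H * Real.exp (-x)) /
        Real.sqrt (Real.sinh x ^ 2 - (d + 2 * H * Real.cosh x) ^ 2) ≤
        -(1 / Real.sqrt (1 - w x ^ 2)) * (-(2 * H + d * Real.cosh x) / Real.sinh x ^ 2)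
      rw [e, Real.sqrt_mul (by positivity), Real.sqrt_sq hs.le]
      have e2 : -(1 / Real.sqrt (1 - w x ^ 2)) *
          (-(2 * H + d * Real.cosh x) / Real.sinh x ^ 2)
          = ((2 * H + d * Real.cosh x) / Real.sinh x) /
            (Real.sinh x * Real.sqrt (1 - w x ^ 2)) := by
        field_simp
      rw [e2]
      gcongr
      rw [le_div_iff₀ hs]
      have hx0 : 0 < x := heta0.trans hx.1
      have a1 : Real.exp (-x) * Real.sinh x ≤ 1 := by
        rw [Real.sinh_eq]
        have : Real.exp (-x) * Real.exp x = 1 := by rw [← Real.exp_add]; simp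
        nlinarith [sq_nonneg (Real.exp (-x))]
      have a2 : d * Real.sinh x ≤ d * Real.cosh x := by
        have := Real.sinh_lt_cosh x
        gcongr
      nlinarith
  have hθ : Real.arccos (w ρ) ≤ Real.arccos (2 * H) := by
    apply Real.arccos_le_arccos
    have hs := hsinh ρ hρ.le
    rw [hw]; simp only
    rw [le_div_iff₀ hs]
    have := Real.sinh_lt_cosh ρ
    nlinarith
  have hθ0 := Real.arccos_nonneg (w (eta H d))
  have hfin : Real.arccos (2 * H) < 2 * Real.pi * Real.sqrt (1 - 2 * H) := by
    have hc : Real.cos (Real.arccos (2 * H)) = 2 * H :=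
      Real.cos_arccos (by linarith) (by linarith)
    have h0 := Real.arccos_nonneg (2 * H)
    have hpi := Real.arccos_le_pi (2 * H)
    have hp : 0 < Real.arccos (2 * H) := Real.arccos_pos.2 (by linarith)
    generalize Real.arccos (2 * H) = θ at *
    have hsin := Real.mul_le_sin (x := θ / 2) (by linarith) (by linarith)
    have hpp := Real.pi_pos
    have e1 : 1 - 2 * H = 2 * Real.sin (θ / 2) ^ 2 := by
      rw [← hc]
      have h1 := Real.cos_sq' (θ / 2)
      have h2 := Real.cos_two_mul (θ / 2)
      rw [show 2 * (θ / 2) = θ by ring] at h2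
      linarith
    have e2 : 2 / Real.pi * (θ / 2) = θ / Real.pi := by field_simp
    rw [e2] at hsin
    have h3 : θ / Real.pi ≤ Real.sqrt (1 - 2 * H) := by
      apply Real.le_sqrt_of_sq_le
      rw [e1]
      have : 0 ≤ θ / Real.pi := by positivity
      nlinarith
    rw [div_le_iff₀ hpp] at h3
    nlinarith
  linarith
end

section
/- Fix H ∈ (0, 1/2). Given d₁ > 2, there exist d₀ > d₁ and δ₀ > 0 such that for every d₂ ∈ [d₀, ∞) and every t ∈ ℝ one has b_{d₂}(t) − b_{d₁}(t) ≥ δ₀; in particular inf over t ∈ ℝ of (b_{d₂}(t) − b_{d₁}(t)) ≥ δ₀ > 0. -/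
open MeasureTheory

open Real in
theorem eta_facts (H d : ℝ) (hH0 : 0 < H) (hH : H < 1 / 2) (hd : 2 < d) :
    d ≤ cosh (eta H d) ∧ 0 ≤ eta H d ∧ log d ≤ eta H d ∧ d ≤ (1 - 4 * H ^ 2) * cosh (eta H d) ∧
    (1 - 4 * H ^ 2) * cosh (eta H d) ^ 2 = 4 * H * d * cosh (eta H d) + 1 + d ^ 2 ∧
    4 * H * d ≤ (1 - 4 * H ^ 2) * cosh (eta H d) := by
  have ha : 0 < 1 - 4 * H ^ 2 := by nlinarith
  set a := 1 - 4 * H ^ 2 with ha'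
  have ha1 : a ≤ 1 := by nlinarith
  set S := √(a + d ^ 2) with hS
  have hS2 : S ^ 2 = a + d ^ 2 := Real.sq_sqrt (by positivity)
  have hSd : d ≤ S := Real.le_sqrt_of_sq_le (by linarith)
  set x := (2 * d * H + S) / a with hx
  have hax : a * x = 2 * d * H + S := by rw [hx]; field_simp
  have hdH : 0 < d * H := by positivity
  have hdax : d ≤ a * x := by linarith
  have hx0 : 0 < x := by positivity
  have hxd : d ≤ x := by nlinarith
  have heta : eta H d = Real.arcosh x := rfl
  have hc : cosh (eta H d) = x := by rw [heta]; exact Real.cosh_arcosh (by linarith)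
  rw [hc]
  refine ⟨hxd, ?_, ?_, hdax, ?_, ?_⟩
  · rw [heta]; exact Real.arcosh_nonneg (by linarith)
  · show log d ≤ log (x + √(x ^ 2 - 1))
    apply Real.log_le_log (by linarith)
    linarith [Real.sqrt_nonneg (x ^ 2 - 1)]
  · have : a * (a * x ^ 2) = a * (4 * H * d * x + 1 + d ^ 2) := by
      have e1 : a * (a * x ^ 2) = (2 * d * H + S) ^ 2 := by rw [← hax]; ring
      have e2 : a * (4 * H * d * x + 1 + d ^ 2) = 4 * H * d * (2 * d * H + S) + a * (1 + d ^ 2) := by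
        rw [← hax]; ring
      rw [e1, e2]; ring_nf; rw [hS2, ha']; ring
    exact mul_left_cancel₀ ha.ne' this
  · rw [hax]; nlinarith

open Real in
theorem pointwise (H d s : ℝ) (hH0 : 0 < H) (hH : H < 1 / 2) (hd : 2 < d) (hs : 0 < s) :
    2 * H / √(1 - 4 * H ^ 2) ≤ (d + 2 * H * cosh (eta H d + s)) /
      √(sinh (eta H d + s) ^ 2 - (d + 2 * H * cosh (eta H d + s)) ^ 2) ∧
    (d + 2 * H * cosh (eta H d + s)) /
      √(sinh (eta H d + s) ^ 2 - (d + 2 * H * cosh (eta H d + s)) ^ 2) ≤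
    2 * H / √(1 - 4 * H ^ 2) + (2 * H / √(1 - 4 * H ^ 2) + √(1 - 4 * H ^ 2)) *
      (exp (-s / 2) / √(1 - exp (-s / 2))) := by
  obtain ⟨h1, h2, -, h4, h5, h6⟩ := eta_facts H d hH0 hH hd
  have ha : 0 < 1 - 4 * H ^ 2 := by nlinarith
  have hsinh2 := Real.sinh_sq (eta H d + s)
  have hsh0 : cosh (eta H d) / 2 ≤ sinh (eta H d) := by
    have := Real.sinh_sq (eta H d)
    have h0 : 0 ≤ sinh (eta H d) := Real.sinh_nonneg_iff.2 h2
    refine (abs_le_of_sq_le_sq' ?_ h0).2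
    nlinarith
  have hcE : cosh (eta H d) ≤ exp (-s / 2) * cosh (eta H d + s) := by
    have hadd := Real.cosh_add (eta H d) s
    have hss : 0 ≤ sinh s := Real.sinh_nonneg_iff.2 hs.le
    have hw : exp (s / 2) ≤ cosh s + sinh s / 2 := by
      have p : exp s = exp (s / 2) ^ 2 := by rw [← Real.exp_nat_mul]; congr 1; push_cast; ring
      have hq : 1 ≤ exp (s / 2) := Real.one_le_exp (by linarith)
      have hm : exp (-s) = (exp (s / 2) ^ 2)⁻¹ := by rw [Real.exp_neg, p]
      rw [Real.cosh_eq, Real.sinh_eq, hm, p]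
      set q := exp (s / 2)
      have hq2 : (q ^ 2)⁻¹ * q ^ 2 = 1 := by field_simp
      have hq3 : 0 < (q ^ 2)⁻¹ := by positivity
      have hy : 0 ≤ (q ^ 2)⁻¹ * ((q - 1) * (3 * q ^ 3 - q ^ 2 - q - 1)) := by
        apply mul_nonneg hq3.le
        apply mul_nonneg (by linarith)
        nlinarith [mul_nonneg (sub_nonneg.2 hq) (sub_nonneg.2 hq), pow_pos (lt_of_lt_of_le one_pos hq) 2]
      have : (q ^ 2)⁻¹ * ((q - 1) * (3 * q ^ 3 - q ^ 2 - q - 1)) = 3 * q ^ 2 - 4 * q + (q ^ 2)⁻¹ := by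
        field_simp; ring
      linarith
    have hE : exp (-s / 2) * exp (s / 2) = 1 := by rw [← Real.exp_add]; ring_nf; simp
    have hle : cosh (eta H d) * exp (s / 2) ≤ cosh (eta H d + s) := by
      have : cosh (eta H d) * exp (s / 2) ≤ cosh (eta H d) * (cosh s + sinh s / 2) :=
        mul_le_mul_of_nonneg_left hw (by linarith)
      nlinarith
    calc cosh (eta H d) = exp (-s / 2) * (cosh (eta H d) * exp (s / 2)) := by linear_combination -cosh (eta H d) * hE
      _ ≤ _ := mul_le_mul_of_nonneg_left hle (Real.exp_pos _).le
  have hE0 : 0 < exp (-s / 2) := Real.exp_pos _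
  have hE1 : exp (-s / 2) < 1 := by
    rw [← Real.exp_zero]; exact Real.exp_lt_exp.2 (by linarith)
  have hc0 : 0 < cosh (eta H d + s) := Real.cosh_pos _
  rw [hsinh2]
  set E := exp (-s / 2)
  set c := cosh (eta H d + s)
  set c0 := cosh (eta H d)
  set a := 1 - 4 * H ^ 2 with ha'
  have hDeq : c ^ 2 - 1 - (d + 2 * H * c) ^ 2 = (c - c0) * (a * c + (a * c0 - 4 * H * d)) := by
    have : (c - c0) * (a * c + (a * c0 - 4 * H * d)) = a * c ^ 2 - 4 * H * d * c - (a * c0 ^ 2 - 4 * H * d * c0) := by ring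
    rw [this, h5, ha']; ring
  have hDl : a * c ^ 2 * (1 - E) ≤ c ^ 2 - 1 - (d + 2 * H * c) ^ 2 := by
    rw [hDeq]
    calc a * c ^ 2 * (1 - E) = (c - E * c) * (a * c) := by ring
      _ ≤ (c - c0) * (a * c + (a * c0 - 4 * H * d)) := by
        apply mul_le_mul (by linarith) (by linarith) (by positivity)
        nlinarith
  have hDpos : 0 < a * c ^ 2 * (1 - E) := mul_pos (by positivity) (by linarith)
  have hDu : c ^ 2 - 1 - (d + 2 * H * c) ^ 2 ≤ a * c ^ 2 := by
    have : 0 < H * d * c := by positivity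
    rw [ha']; nlinarith
  set D := c ^ 2 - 1 - (d + 2 * H * c) ^ 2
  have hsa : 0 < √a := Real.sqrt_pos.2 ha
  have hsaa : √a * √a = a := Real.mul_self_sqrt ha.le
  have hsD : 0 < √D := Real.sqrt_pos.2 (by linarith)
  have hsDu : √D ≤ √a * c := by
    calc √D ≤ √(a * c ^ 2) := Real.sqrt_le_sqrt hDu
      _ = √a * c := by rw [Real.sqrt_mul ha.le, Real.sqrt_sq hc0.le]
  have hsE : 0 < √(1 - E) := Real.sqrt_pos.2 (by linarith)
  have hsEE : √(1 - E) ^ 2 = 1 - E := Real.sq_sqrt (by linarith)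
  have hsDl : √a * c * √(1 - E) ≤ √D := by
    calc √a * c * √(1 - E) = √(a * c ^ 2 * (1 - E)) := by
          rw [Real.sqrt_mul (by positivity), Real.sqrt_mul ha.le, Real.sqrt_sq hc0.le]
      _ ≤ _ := Real.sqrt_le_sqrt hDl
  constructor
  · rw [div_le_div_iff₀ hsa hsD]
    nlinarith [mul_le_mul_of_nonneg_left hsDu hH0.le, mul_pos hsa (by linarith : 0 < d)]
  · have hN : d + 2 * H * c ≤ c * (2 * H + a * E) := by nlinarith
    have step : (d + 2 * H * c) / √D ≤ c * (2 * H + a * E) / (√a * c * √(1 - E)) :=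
      div_le_div₀ (by positivity) hN (by positivity) hsDl
    refine step.trans ?_
    have e1 : c * (2 * H + a * E) / (√a * c * √(1 - E)) = (2 * H / √a + √a * E) / √(1 - E) := by
      field_simp; rw [show √a ^ 2 = a by rw [sq, hsaa]]; ring
    have hk : 0 < 2 * H / √a := by positivity
    rw [e1, div_le_iff₀ hsE]
    set k := 2 * H / √a
    have e2 : (k + (k + √a) * (E / √(1 - E))) * √(1 - E) = k * √(1 - E) + (k + √a) * E := by
      field_simp
    rw [e2]
    have : 1 - E ≤ √(1 - E) := by
      have : √(1 - E) ≤ 1 := Real.sqrt_le_iff.2 ⟨by norm_num, by linarith⟩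
      calc 1 - E = √(1 - E) * √(1 - E) := by rw [← sq, hsEE]
        _ ≤ √(1 - E) * 1 := mul_le_mul_of_nonneg_left this hsE.le
        _ = _ := mul_one _
    have := mul_le_mul_of_nonneg_left this hk.le
    linarith

open Real in
theorem lam_bounds (H d ρ : ℝ) (hH0 : 0 < H) (hH : H < 1 / 2) (hd : 2 < d) (hρ : eta H d ≤ ρ) :
    2 * H / √(1 - 4 * H ^ 2) * (ρ - eta H d) ≤ lam H d ρ ∧
    lam H d ρ ≤ 2 * H / √(1 - 4 * H ^ 2) * (ρ - eta H d) +
      4 * (2 * H / √(1 - 4 * H ^ 2) + √(1 - 4 * H ^ 2)) := by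
  have hpt : ∀ r ∈ Set.Ioo (eta H d) ρ, _ := fun r hr =>
    pointwise H d (r - eta H d) hH0 hH hd (sub_pos.2 hr.1)
  simp only [add_sub_cancel] at hpt
  have ha : 0 < 1 - 4 * H ^ 2 := by nlinarith
  unfold lam
  set η := eta H d
  have hM : 0 < 2 * H / √(1 - 4 * H ^ 2) + √(1 - 4 * H ^ 2) := by
    have := Real.sqrt_pos.2 ha
    positivity
  have hk : 0 < 2 * H / √(1 - 4 * H ^ 2) := by
    have := Real.sqrt_pos.2 ha
    positivity
  set k := 2 * H / √(1 - 4 * H ^ 2)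
  set M := k + √(1 - 4 * H ^ 2)
  set f : ℝ → ℝ := fun r => (d + 2 * H * cosh r) / √(sinh r ^ 2 - (d + 2 * H * cosh r) ^ 2) with hf
  set h : ℝ → ℝ := fun r => k + M * (exp (-(r - η) / 2) / √(1 - exp (-(r - η) / 2))) with hh
  set F : ℝ → ℝ := fun r => k * (r - η) + 4 * M * √(1 - exp (-(r - η) / 2)) with hF
  have hFc : ContinuousOn F (Set.Icc η ρ) := by
    apply Continuous.continuousOn; fun_prop
  have hFd : ∀ r ∈ Set.Ioo η ρ, HasDerivAt F (h r) r := by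
    intro r hr
    have hE1 : exp (-(r - η) / 2) < 1 := by
      rw [← Real.exp_zero]; exact Real.exp_lt_exp.2 (by linarith [hr.1])
    have hp : 0 < 1 - exp (-(r - η) / 2) := by linarith
    have d0 : HasDerivAt (fun r : ℝ => -(r - η) / 2) (-1 / 2) r :=
      (((hasDerivAt_id r).sub_const η).neg).div_const 2
    have d1 := ((d0.exp.const_sub 1).sqrt hp.ne').const_mul (4 * M)
    have d2 := (((hasDerivAt_id r).sub_const η).const_mul k).add d1
    have d3 : HasDerivAt F _ r := d2
    refine d3.congr_deriv (Eq.symm ?_)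
    show k + M * (exp (-(r - η) / 2) / √(1 - exp (-(r - η) / 2))) = _
    have := Real.sqrt_pos.2 hp
    field_simp
    ring
  have hh0 : ∀ r ∈ Set.Ioo η ρ, 0 ≤ h r := fun r _ => by
    simp only [hh]; positivity
  have hhi : IntervalIntegrable h volume η ρ := by
    apply intervalIntegral.intervalIntegrable_deriv_of_nonneg (g := F)
    · rwa [Set.uIcc_of_le hρ]
    · rwa [min_eq_left hρ, max_eq_right hρ]
    · rwa [min_eq_left hρ, max_eq_right hρ]
  have hhI : ∫ r in η..ρ, h r = F ρ - F η :=
    intervalIntegral.integral_eq_sub_of_hasDerivAt_of_le hρ hFc hFd hhi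
  have hfm : Measurable f := by simp only [hf]; fun_prop
  have hfi : IntervalIntegrable f volume η ρ := by
    rw [intervalIntegrable_iff_integrableOn_Ioo_of_le hρ] at hhi ⊢
    refine Integrable.mono' hhi hfm.aestronglyMeasurable ?_
    filter_upwards [ae_restrict_mem measurableSet_Ioo] with r hr
    rw [Real.norm_eq_abs, abs_of_nonneg (hk.le.trans (hpt r hr).1)]
    exact (hpt r hr).2
  constructor
  · have := intervalIntegral.integral_mono_on_of_le_Ioo hρ
      (intervalIntegrable_const (c := k) (μ := volume)) hfi (fun r hr => (hpt r hr).1)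
    rw [intervalIntegral.integral_const, smul_eq_mul] at this
    linarith
  · have := intervalIntegral.integral_mono_on_of_le_Ioo hρ hfi hhi (fun r hr => (hpt r hr).2)
    rw [hhI] at this
    have hFη : F η = 0 := by simp [hF]
    have h1 : √(1 - exp (-(ρ - η) / 2)) ≤ 1 := by
      exact Real.sqrt_le_iff.2 ⟨by norm_num, by linarith [Real.exp_pos (-(ρ - η) / 2)]⟩
    have : F ρ ≤ k * (ρ - η) + 4 * M := by simp only [hF]; nlinarith
    linarith

/-- For each `d`, the function `t ↦ g d t` encodes the inverse `λ_d^{-1} : [0, ∞) → [η_d, ∞)`,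
and `b_d(t) = λ_d^{-1}(|t|) = g d |t|`. -/
theorem stmt_16 (H d₁ : ℝ) (hH0 : 0 < H) (hH : H < 1 / 2) (hd₁ : 2 < d₁)
    (g : ℝ → ℝ → ℝ)
    (hg : ∀ d : ℝ, 2 < d → ∀ t : ℝ, 0 ≤ t → eta H d ≤ g d t ∧ lam H d (g d t) = t) :
    ∃ d₀ : ℝ, d₁ < d₀ ∧ ∃ δ₀ : ℝ, 0 < δ₀ ∧
      ∀ d₂ : ℝ, d₀ ≤ d₂ → ∀ t : ℝ, δ₀ ≤ g d₂ |t| - g d₁ |t| := by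
  have ha : 0 < 1 - 4 * H ^ 2 := by nlinarith
  have hsa := Real.sqrt_pos.2 ha
  have hk : 0 < 2 * H / √(1 - 4 * H ^ 2) := by positivity
  have hb := fun d ρ => lam_bounds H d ρ hH0 hH
  set k := 2 * H / √(1 - 4 * H ^ 2)
  set C := 4 * (k + √(1 - 4 * H ^ 2))
  refine ⟨max (d₁ + 1) (Real.exp (eta H d₁ + C / k + 1)),
    lt_of_lt_of_le (by linarith) (le_max_left _ _), 1, one_pos, fun d₂ hd₂ t => ?_⟩
  have h2 : d₁ + 1 ≤ d₂ := (le_max_left _ _).trans hd₂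
  have h3 : Real.exp (eta H d₁ + C / k + 1) ≤ d₂ := (le_max_right _ _).trans hd₂
  have h4 : eta H d₁ + C / k + 1 ≤ Real.log d₂ := (Real.le_log_iff_exp_le (by linarith)).2 h3
  have h5 := (eta_facts H d₂ hH0 hH (by linarith)).2.2.1
  obtain ⟨g1, l1⟩ := hg d₁ hd₁ |t| (abs_nonneg t)
  obtain ⟨g2, l2⟩ := hg d₂ (by linarith) |t| (abs_nonneg t)
  have b1 := (hb d₁ _ hd₁ g1).1
  have b2 := (hb d₂ _ (by linarith) g2).2
  rw [l1] at b1
  rw [l2] at b2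
  have hCk : k * (C / k) = C := by field_simp
  have : k * (g d₁ |t| - eta H d₁) ≤ k * (g d₂ |t| - eta H d₂ + C / k) := by
    rw [mul_add, hCk]; linarith
  have := le_of_mul_le_mul_left this hk
  linarith
end

section
/- Fix H ∈ (0, 1/2) and let 2 < d₁ < d₂. The function t ↦ b_{d₂}(t) − b_{d₁}(t) is strictly decreasing for t > 0 and strictly increasing for t < 0; in particular sup over t ∈ ℝ of (b_{d₂}(t) − b_{d₁}(t)) = b_{d₂}(0) − b_{d₁}(0) = η_{d₂} − η_{d₁}. -/
open MeasureTheory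

/-- The integrand of `lam`. -/
noncomputable def ff (H d r : ℝ) : ℝ :=
  (d + 2 * H * Real.cosh r) / Real.sqrt (Real.sinh r ^ 2 - (d + 2 * H * Real.cosh r) ^ 2)

/-- Uniformizing parametrization of the radius. -/
noncomputable def RR (H d a : ℝ) : ℝ := Real.arsinh (d / (2 * H) * Real.sinh a) + a

noncomputable def aa (H : ℝ) : ℝ := Real.arsinh (2 * H / Real.sqrt (1 - 4 * H ^ 2))

/-- The common value `sinh ρ / (d + 2H cosh ρ)` along the parametrization. -/
noncomputable def vv (H a : ℝ) : ℝ := Real.sinh a / (2 * H * Real.cosh a)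

noncomputable def phi (H a : ℝ) : ℝ := Real.sqrt (vv H a ^ 2 - 1)

lemma vv_strictMono {H : ℝ} (hH : 0 < H) : StrictMono (vv H) := by
  intro a b hab
  unfold vv
  rw [div_lt_div_iff₀ (by positivity) (by positivity)]
  have := Real.sinh_pos_iff.2 (sub_pos.2 hab)
  rw [Real.sinh_sub] at this
  nlinarith

lemma sqrt_q_pos {H : ℝ} (hH0 : 0 < H) (hH : H < 1 / 2) : 0 < Real.sqrt (1 - 4 * H ^ 2) := by
  apply Real.sqrt_pos.2; nlinarith

lemma cosh_aa {H : ℝ} (hH0 : 0 < H) (hH : H < 1 / 2) :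
    Real.cosh (aa H) = 1 / Real.sqrt (1 - 4 * H ^ 2) := by
  have hq := sqrt_q_pos hH0 hH
  have hs : Real.sqrt (1 - 4 * H ^ 2) ^ 2 = 1 - 4 * H ^ 2 := Real.sq_sqrt (by nlinarith)
  have h1 : 0 < Real.cosh (aa H) := Real.cosh_pos _
  have h2 : Real.cosh (aa H) ^ 2 = (1 / Real.sqrt (1 - 4 * H ^ 2)) ^ 2 := by
    rw [Real.cosh_sq, aa, Real.sinh_arsinh]
    generalize Real.sqrt (1 - 4 * H ^ 2) = s at hs hq ⊢
    field_simp
    linarith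
  exact (pow_left_inj₀ h1.le (by positivity) two_ne_zero).1 h2

lemma aa_pos {H : ℝ} (hH0 : 0 < H) (hH : H < 1 / 2) : 0 < aa H := by
  have hq := sqrt_q_pos hH0 hH
  exact Real.arsinh_pos_iff.2 (by positivity)

lemma vv_aa {H : ℝ} (hH0 : 0 < H) (hH : H < 1 / 2) : vv H (aa H) = 1 := by
  have hq := sqrt_q_pos hH0 hH
  rw [vv, cosh_aa hH0 hH, aa, Real.sinh_arsinh]
  generalize Real.sqrt (1 - 4 * H ^ 2) = s at hq ⊢
  field_simp

lemma sinh_RR {H d : ℝ} (hH0 : 0 < H) (a : ℝ) :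
    Real.sinh (RR H d a) = vv H a * (d + 2 * H * Real.cosh (RR H d a)) := by
  have h : Real.sinh (RR H d a - a) = d / (2 * H) * Real.sinh a := by
    simp [RR, Real.sinh_arsinh]
  rw [Real.sinh_sub] at h
  have hc := Real.cosh_pos a
  unfold vv
  field_simp at h ⊢
  linarith

lemma RR_strictMono {H d : ℝ} (hH0 : 0 < H) (hd : 0 < d) : StrictMono (RR H d) := by
  intro a b hab
  unfold RR
  have h := Real.sinh_lt_sinh.2 hab
  have : d / (2 * H) * Real.sinh a < d / (2 * H) * Real.sinh b :=
    mul_lt_mul_of_pos_left h (by positivity)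
  have := Real.arsinh_lt_arsinh.2 this
  linarith

lemma RR_deriv (H d a : ℝ) : HasDerivAt (RR H d)
    ((Real.sqrt (1 + (d / (2 * H) * Real.sinh a) ^ 2))⁻¹ * (d / (2 * H) * Real.cosh a) + 1) a := by
  have h1 : HasDerivAt (fun a => d / (2 * H) * Real.sinh a) (d / (2 * H) * Real.cosh a) a :=
    (Real.hasDerivAt_sinh a).const_mul _
  exact ((Real.hasDerivAt_arsinh _).comp a h1).add (hasDerivAt_id a)

lemma RR_cont (H d : ℝ) : Continuous (RR H d) :=
  continuous_iff_continuousAt.2 fun a => (RR_deriv H d a).continuousAt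

lemma RR_deriv_lt {H d₁ d₂ a : ℝ} (hH0 : 0 < H) (h1 : 0 < d₁) (h12 : d₁ < d₂) :
    ((Real.sqrt (1 + (d₁ / (2 * H) * Real.sinh a) ^ 2))⁻¹ * (d₁ / (2 * H) * Real.cosh a) + 1) <
    ((Real.sqrt (1 + (d₂ / (2 * H) * Real.sinh a) ^ 2))⁻¹ * (d₂ / (2 * H) * Real.cosh a) + 1) := by
  set k₁ := d₁ / (2 * H) with hk1
  set k₂ := d₂ / (2 * H) with hk2
  have hk1p : 0 < k₁ := by positivity
  have hk : k₁ < k₂ := by rw [hk1, hk2]; gcongr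
  have hk2p : 0 < k₂ := hk1p.trans hk
  have hc := Real.cosh_pos a
  set s := Real.sinh a
  have key : (Real.sqrt (1 + (k₁ * s) ^ 2))⁻¹ * k₁ < (Real.sqrt (1 + (k₂ * s) ^ 2))⁻¹ * k₂ := by
    have p1 : 0 < Real.sqrt (1 + (k₁ * s) ^ 2) := Real.sqrt_pos.2 (by positivity)
    have p2 : 0 < Real.sqrt (1 + (k₂ * s) ^ 2) := Real.sqrt_pos.2 (by positivity)
    rw [inv_mul_eq_div, inv_mul_eq_div, div_lt_div_iff₀ p1 p2]
    apply lt_of_pow_lt_pow_left₀ 2 (by positivity)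
    rw [mul_pow k₁ (Real.sqrt _), mul_pow k₂ (Real.sqrt _), Real.sq_sqrt (by positivity), Real.sq_sqrt (by positivity)]
    nlinarith
  have := mul_lt_mul_of_pos_right key hc
  linarith

lemma eta_eq {H d : ℝ} (hH0 : 0 < H) (hH : H < 1 / 2) (hd : 0 < d) :
    eta H d = RR H d (aa H) := by
  have hq := sqrt_q_pos hH0 hH
  have hs : Real.sqrt (1 - 4 * H ^ 2) ^ 2 = 1 - 4 * H ^ 2 := Real.sq_sqrt (by nlinarith)
  have hq' : 0 < 1 - 4 * H ^ 2 := by nlinarith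
  have hpos : 0 < RR H d (aa H) := by
    have := RR_strictMono hH0 hd (aa_pos hH0 hH)
    simpa [RR] using this
  have hc : Real.cosh (RR H d (aa H)) =
      (2 * d * H + Real.sqrt (1 - 4 * H ^ 2 + d ^ 2)) / (1 - 4 * H ^ 2) := by
    rw [RR, Real.cosh_add, Real.cosh_arsinh, Real.sinh_arsinh, cosh_aa hH0 hH]
    have hsi : Real.sinh (aa H) = 2 * H / Real.sqrt (1 - 4 * H ^ 2) := by rw [aa, Real.sinh_arsinh]
    rw [hsi]
    have e : Real.sqrt (1 + (d / (2 * H) * (2 * H / Real.sqrt (1 - 4 * H ^ 2))) ^ 2)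
        = Real.sqrt (1 - 4 * H ^ 2 + d ^ 2) / Real.sqrt (1 - 4 * H ^ 2) := by
      rw [← Real.sqrt_div (by positivity)]
      congr 1
      rw [show (1 - 4 * H ^ 2 + d ^ 2) / (1 - 4 * H ^ 2) = 1 + d ^ 2 / (1 - 4 * H ^ 2) by
        rw [add_div, div_self hq'.ne'], ← hs]
      rw [Real.sqrt_sq hq.le]
      generalize Real.sqrt (1 - 4 * H ^ 2) = s at hq ⊢
      field_simp
    rw [e]
    generalize Real.sqrt (1 - 4 * H ^ 2 + d ^ 2) = r
    generalize Real.sqrt (1 - 4 * H ^ 2) = s at hs hq ⊢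
    rw [← hs]
    field_simp
    ring
  rw [eta, ← hc, arcosh, Real.cosh_sq, add_sub_cancel_right,
    Real.sqrt_sq (Real.sinh_pos_iff.2 hpos).le, Real.cosh_add_sinh, Real.log_exp]

lemma phi_pos {H a : ℝ} (hH0 : 0 < H) (hH : H < 1 / 2) (ha : aa H < a) : 0 < phi H a := by
  have := vv_strictMono hH0 ha
  rw [vv_aa hH0 hH] at this
  exact Real.sqrt_pos.2 (by nlinarith)

lemma phi_lt {H a b : ℝ} (hH0 : 0 < H) (hH : H < 1 / 2) (ha : aa H < a) (hab : a < b) :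
    phi H a < phi H b := by
  have h1 := vv_strictMono hH0 ha
  have h2 := vv_strictMono hH0 hab
  rw [vv_aa hH0 hH] at h1
  exact Real.sqrt_lt_sqrt (by nlinarith) (by nlinarith)

lemma ff_RR {H d a : ℝ} (hH0 : 0 < H) (hd : 0 < d) :
    ff H d (RR H d a) = (phi H a)⁻¹ := by
  have hw : 0 < d + 2 * H * Real.cosh (RR H d a) := by
    have := Real.cosh_pos (RR H d a); positivity
  rw [ff, sinh_RR hH0]
  set w := d + 2 * H * Real.cosh (RR H d a)
  rw [show (vv H a * w) ^ 2 - w ^ 2 = w ^ 2 * (vv H a ^ 2 - 1) by ring,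
    Real.sqrt_mul (by positivity), Real.sqrt_sq hw.le, phi]
  rw [div_mul_eq_div_div, div_self hw.ne', one_div]

lemma P_RR {H d a : ℝ} (hH0 : 0 < H) (hH : H < 1 / 2) (hd : 0 < d) (ha : aa H < a) :
    0 < Real.sinh (RR H d a) ^ 2 - (d + 2 * H * Real.cosh (RR H d a)) ^ 2 := by
  have hw : 0 < d + 2 * H * Real.cosh (RR H d a) := by
    have := Real.cosh_pos (RR H d a); positivity
  rw [sinh_RR hH0]
  set w := d + 2 * H * Real.cosh (RR H d a)
  have := vv_strictMono hH0 ha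
  rw [vv_aa hH0 hH] at this
  rw [show (vv H a * w) ^ 2 - w ^ 2 = w ^ 2 * (vv H a ^ 2 - 1) by ring]
  have : 0 < vv H a ^ 2 - 1 := by nlinarith
  positivity

lemma exists_RR {H d ρ : ℝ} (hH0 : 0 < H) (hH : H < 1 / 2) (hd : 0 < d) (hρ : eta H d < ρ) :
    ∃ a, aa H < a ∧ RR H d a = ρ := by
  rw [eta_eq hH0 hH hd] at hρ
  have ha0 := aa_pos hH0 hH
  have key : ∀ a, 0 ≤ a → a ≤ RR H d a := fun a h => by
    have : 0 ≤ Real.arsinh (d / (2 * H) * Real.sinh a) :=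
      Real.arsinh_nonneg_iff.2 (mul_nonneg (by positivity) (Real.sinh_nonneg_iff.2 h))
    unfold RR; linarith
  have h1 : aa H < ρ := (key _ ha0.le).trans_lt hρ
  obtain ⟨a, ha, e⟩ := intermediate_value_Icc h1.le (RR_cont H d).continuousOn
    (show ρ ∈ Set.Icc _ _ from ⟨hρ.le, key ρ (ha0.trans h1).le⟩)
  refine ⟨a, ?_, e⟩
  rw [← e] at hρ
  exact (RR_strictMono hH0 hd).lt_iff_lt.1 hρ

lemma ff_contAt {H d ρ : ℝ} (hH0 : 0 < H) (hH : H < 1 / 2) (hd : 0 < d) (hρ : eta H d < ρ) :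
    ContinuousAt (ff H d) ρ := by
  obtain ⟨a, ha, rfl⟩ := exists_RR hH0 hH hd hρ
  have := P_RR hH0 hH hd ha
  unfold ff
  refine ContinuousAt.div ?_ ?_ (Real.sqrt_pos.2 this).ne'
  · exact (continuous_const.add (continuous_const.mul Real.continuous_cosh)).continuousAt
  · exact (Real.continuous_sqrt.comp ((Real.continuous_sinh.pow 2).sub
      ((continuous_const.add (continuous_const.mul Real.continuous_cosh)).pow 2))).continuousAt

lemma ff_pos {H d ρ : ℝ} (hH0 : 0 < H) (hH : H < 1 / 2) (hd : 0 < d) (hρ : eta H d < ρ) :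
    0 < ff H d ρ := by
  obtain ⟨a, ha, rfl⟩ := exists_RR hH0 hH hd hρ
  rw [ff_RR hH0 hd]
  exact inv_pos.2 (phi_pos hH0 hH ha)

lemma ff_int {H d : ℝ} (hH0 : 0 < H) (hH : H < 1 / 2) (hd : 0 < d) {g : ℝ → ℝ}
    (hg : ∀ t : ℝ, 0 ≤ t → eta H d ≤ g t ∧ lam H d (g t) = t)
    {ρ : ℝ} (hρ : eta H d ≤ ρ) : IntervalIntegrable (ff H d) volume (eta H d) ρ := by
  rcases hρ.eq_or_lt with h | h
  · rw [← h]
  obtain ⟨h1, h2⟩ := hg 1 zero_le_one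
  have hi : IntervalIntegrable (ff H d) volume (eta H d) (g 1) := by
    by_contra hcon
    have : lam H d (g 1) = 0 := intervalIntegral.integral_undef hcon
    linarith
  have h1' : eta H d < g 1 := by
    rcases h1.eq_or_lt with h' | h'
    · rw [← h', lam, intervalIntegral.integral_same] at h2; linarith
    · exact h'
  refine hi.trans (ContinuousOn.intervalIntegrable fun x hx => ?_)
  refine (ff_contAt hH0 hH hd ?_).continuousWithinAt
  exact (lt_min h1' h).trans_le hx.1

lemma lam_deriv {H d : ℝ} (hH0 : 0 < H) (hH : H < 1 / 2) (hd : 0 < d) {g : ℝ → ℝ}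
    (hg : ∀ t : ℝ, 0 ≤ t → eta H d ≤ g t ∧ lam H d (g t) = t)
    {ρ : ℝ} (hρ : eta H d < ρ) : HasDerivAt (lam H d) (ff H d ρ) ρ := by
  have hm : StronglyMeasurableAtFilter (ff H d) (nhds ρ) volume :=
    ContinuousAt.stronglyMeasurableAtFilter isOpen_Ioi
      (fun x (hx : x ∈ Set.Ioi (eta H d)) => ff_contAt hH0 hH hd hx) ρ hρ
  exact intervalIntegral.integral_hasDerivAt_right (ff_int hH0 hH hd hg hρ.le) hm
    (ff_contAt hH0 hH hd hρ)

lemma lam_cont {H d : ℝ} (hH0 : 0 < H) (hH : H < 1 / 2) (hd : 0 < d) {g : ℝ → ℝ}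
    (hg : ∀ t : ℝ, 0 ≤ t → eta H d ≤ g t ∧ lam H d (g t) = t)
    : ContinuousOn (lam H d) (Set.Ici (eta H d)) := by
  intro x hx
  rcases (Set.mem_Ici.1 hx).eq_or_lt with h | h
  · subst h
    have h1 : eta H d < eta H d + 1 := by linarith
    have hi := ff_int hH0 hH hd hg h1.le
    have := intervalIntegral.continuousOn_primitive_interval
      (μ := volume) (f := ff H d) (a := eta H d) (b := eta H d + 1)
      (by rw [Set.uIcc_of_le h1.le]; exact (intervalIntegrable_iff_integrableOn_Icc_of_le h1.le).1 hi)
    rw [Set.uIcc_of_le h1.le] at this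
    have h2 := this (eta H d) ⟨le_rfl, h1.le⟩
    exact h2.mono_of_mem_nhdsWithin (Icc_mem_nhdsGE h1)
  · exact (lam_deriv hH0 hH hd hg h).continuousAt.continuousWithinAt

lemma lam_mono {H d : ℝ} (hH0 : 0 < H) (hH : H < 1 / 2) (hd : 0 < d) {g : ℝ → ℝ}
    (hg : ∀ t : ℝ, 0 ≤ t → eta H d ≤ g t ∧ lam H d (g t) = t)
    : StrictMonoOn (lam H d) (Set.Ici (eta H d)) := by
  apply strictMonoOn_of_deriv_pos (convex_Ici _) (lam_cont hH0 hH hd hg)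
  intro x hx
  rw [interior_Ici] at hx
  rw [(lam_deriv hH0 hH hd hg hx).deriv]
  exact ff_pos hH0 hH hd hx

lemma lam_eta {H d : ℝ} : lam H d (eta H d) = 0 := intervalIntegral.integral_same

lemma g_lam {H d : ℝ} (hH0 : 0 < H) (hH : H < 1 / 2) (hd : 0 < d) {g : ℝ → ℝ}
    (hg : ∀ t : ℝ, 0 ≤ t → eta H d ≤ g t ∧ lam H d (g t) = t)
    {ρ : ℝ} (hρ : eta H d ≤ ρ) : g (lam H d ρ) = ρ := by
  have h0 : 0 ≤ lam H d ρ := by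
    rw [← lam_eta]
    exact (lam_mono hH0 hH hd hg).monotoneOn Set.self_mem_Ici hρ hρ
  obtain ⟨h1, h2⟩ := hg _ h0
  exact (lam_mono hH0 hH hd hg).injOn h1 hρ h2

lemma g_zero {H d : ℝ} (hH0 : 0 < H) (hH : H < 1 / 2) (hd : 0 < d) {g : ℝ → ℝ}
    (hg : ∀ t : ℝ, 0 ≤ t → eta H d ≤ g t ∧ lam H d (g t) = t)
    : g 0 = eta H d := by
  have := g_lam hH0 hH hd hg le_rfl
  rwa [lam_eta] at this

lemma g_mono {H d : ℝ} (hH0 : 0 < H) (hH : H < 1 / 2) (hd : 0 < d) {g : ℝ → ℝ}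
    (hg : ∀ t : ℝ, 0 ≤ t → eta H d ≤ g t ∧ lam H d (g t) = t)
    : StrictMonoOn g (Set.Ici 0) := by
  intro s hs t ht hst
  obtain ⟨h1, h2⟩ := hg s hs
  obtain ⟨h3, h4⟩ := hg t ht
  rw [← (lam_mono hH0 hH hd hg).lt_iff_lt h1 h3, h2, h4]
  exact hst

lemma g_gt {H d : ℝ} (hH0 : 0 < H) (hH : H < 1 / 2) (hd : 0 < d) {g : ℝ → ℝ}
    (hg : ∀ t : ℝ, 0 ≤ t → eta H d ≤ g t ∧ lam H d (g t) = t)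
    {t : ℝ} (ht : 0 < t) : eta H d < g t := by
  rw [← g_zero hH0 hH hd hg]
  exact g_mono hH0 hH hd hg Set.self_mem_Ici ht.le ht

lemma lam_pos' {H d : ℝ} (hH0 : 0 < H) (hH : H < 1 / 2) (hd : 0 < d) {g : ℝ → ℝ}
    (hg : ∀ t : ℝ, 0 ≤ t → eta H d ≤ g t ∧ lam H d (g t) = t)
    {ρ : ℝ} (hρ : eta H d < ρ) : 0 < lam H d ρ := by
  rw [← lam_eta]
  exact lam_mono hH0 hH hd hg Set.self_mem_Ici hρ.le hρ

lemma g_contAt {H d : ℝ} (hH0 : 0 < H) (hH : H < 1 / 2) (hd : 0 < d) {g : ℝ → ℝ}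
    (hg : ∀ t : ℝ, 0 ≤ t → eta H d ≤ g t ∧ lam H d (g t) = t)
    {t : ℝ} (ht : 0 < t) : ContinuousAt g t := by
  refine ((g_mono hH0 hH hd hg).mono Set.Ioi_subset_Ici_self).continuousAt_of_image_mem_nhds
    (Ioi_mem_nhds ht) ?_
  refine Filter.mem_of_superset (Ioi_mem_nhds (g_gt hH0 hH hd hg ht)) fun ρ hρ => ?_
  exact ⟨lam H d ρ, lam_pos' hH0 hH hd hg hρ, g_lam hH0 hH hd hg (le_of_lt hρ)⟩

lemma g_cont {H d : ℝ} (hH0 : 0 < H) (hH : H < 1 / 2) (hd : 0 < d) {g : ℝ → ℝ}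
    (hg : ∀ t : ℝ, 0 ≤ t → eta H d ≤ g t ∧ lam H d (g t) = t)
    : ContinuousOn g (Set.Ici 0) := by
  intro t ht
  rcases (Set.mem_Ici.1 ht).eq_or_lt with h | h
  · subst h
    refine (g_mono hH0 hH hd hg).continuousWithinAt_right_of_exists_between
      self_mem_nhdsWithin fun b hb => ?_
    have hb' : eta H d < b := by rwa [g_zero hH0 hH hd hg] at hb
    refine ⟨lam H d b, (lam_pos' hH0 hH hd hg hb').le, ?_⟩
    rw [g_lam hH0 hH hd hg hb'.le]
    exact ⟨hb, le_rfl⟩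
  · exact (g_contAt hH0 hH hd hg h).continuousWithinAt

lemma g_deriv {H d : ℝ} (hH0 : 0 < H) (hH : H < 1 / 2) (hd : 0 < d) {g : ℝ → ℝ}
    (hg : ∀ t : ℝ, 0 ≤ t → eta H d ≤ g t ∧ lam H d (g t) = t)
    {t : ℝ} (ht : 0 < t) : HasDerivAt g (ff H d (g t))⁻¹ t := by
  have h := g_gt hH0 hH hd hg ht
  refine HasDerivAt.of_local_left_inverse (g_contAt hH0 hH hd hg ht)
    (lam_deriv hH0 hH hd hg h) (ff_pos hH0 hH hd h).ne' ?_
  filter_upwards [Ioi_mem_nhds ht] with s hs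
  exact (hg s (le_of_lt hs)).2

lemma lam_lt {H d₁ d₂ : ℝ} (hH0 : 0 < H) (hH : H < 1 / 2)
    (hd₁ : 0 < d₁) (hd : d₁ < d₂) {g₁ g₂ : ℝ → ℝ}
    (hg₁ : ∀ t : ℝ, 0 ≤ t → eta H d₁ ≤ g₁ t ∧ lam H d₁ (g₁ t) = t)
    (hg₂ : ∀ t : ℝ, 0 ≤ t → eta H d₂ ≤ g₂ t ∧ lam H d₂ (g₂ t) = t) {a : ℝ} (ha : aa H < a) :
    lam H d₁ (RR H d₁ a) < lam H d₂ (RR H d₂ a) := by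
  have hd₂ := hd₁.trans hd
  have hc : ∀ d, 0 < d → ∀ g : ℝ → ℝ, (∀ t : ℝ, 0 ≤ t → eta H d ≤ g t ∧ lam H d (g t) = t) →
      ContinuousOn (fun a => lam H d (RR H d a)) (Set.Ici (aa H)) := fun d hd g hg => by
    refine (lam_cont hH0 hH hd hg).comp (RR_cont H d).continuousOn fun x hx => ?_
    rw [Set.mem_Ici, eta_eq hH0 hH hd]
    exact (RR_strictMono hH0 hd).monotone hx
  have hD : ∀ d, 0 < d → ∀ g : ℝ → ℝ, (∀ t : ℝ, 0 ≤ t → eta H d ≤ g t ∧ lam H d (g t) = t) →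
      ∀ x, aa H < x → HasDerivAt (fun a => lam H d (RR H d a)) ((phi H x)⁻¹ *
      ((Real.sqrt (1 + (d / (2 * H) * Real.sinh x) ^ 2))⁻¹ * (d / (2 * H) * Real.cosh x) + 1)) x :=
    fun d hd g hg x hx => by
    have h : eta H d < RR H d x := by
      rw [eta_eq hH0 hH hd]; exact RR_strictMono hH0 hd hx
    have := (lam_deriv hH0 hH hd hg h).comp x (RR_deriv H d x)
    rwa [ff_RR hH0 hd] at this
  have hm : StrictMonoOn (fun a => lam H d₂ (RR H d₂ a) - lam H d₁ (RR H d₁ a))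
      (Set.Ici (aa H)) := by
    apply strictMonoOn_of_deriv_pos (convex_Ici _) ((hc _ hd₂ _ hg₂).sub (hc _ hd₁ _ hg₁))
    intro x hx
    rw [interior_Ici] at hx
    rw [((hD _ hd₂ _ hg₂ x hx).sub (hD _ hd₁ _ hg₁ x hx)).deriv, ← mul_sub]
    exact mul_pos (inv_pos.2 (phi_pos hH0 hH hx)) (sub_pos.2 (RR_deriv_lt hH0 hd₁ hd))
  have := hm Set.self_mem_Ici ha.le ha
  simp only [← eta_eq hH0 hH hd₁, ← eta_eq hH0 hH hd₂, lam_eta] at this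
  linarith

lemma diff_anti {H d₁ d₂ : ℝ} (hH0 : 0 < H) (hH : H < 1 / 2)
    (hd₁ : 0 < d₁) (hd : d₁ < d₂) {g₁ g₂ : ℝ → ℝ}
    (hg₁ : ∀ t : ℝ, 0 ≤ t → eta H d₁ ≤ g₁ t ∧ lam H d₁ (g₁ t) = t)
    (hg₂ : ∀ t : ℝ, 0 ≤ t → eta H d₂ ≤ g₂ t ∧ lam H d₂ (g₂ t) = t) :
    StrictAntiOn (fun t => g₂ t - g₁ t) (Set.Ici 0) := by
  have hd₂ := hd₁.trans hd
  apply strictAntiOn_of_deriv_neg (convex_Ici _)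
    ((g_cont hH0 hH hd₂ hg₂).sub (g_cont hH0 hH hd₁ hg₁))
  intro t ht
  rw [interior_Ici] at ht
  rw [((g_deriv hH0 hH hd₂ hg₂ ht).sub (g_deriv hH0 hH hd₁ hg₁ ht)).deriv]
  obtain ⟨a, ha, ea⟩ := exists_RR hH0 hH hd₁ (g_gt hH0 hH hd₁ hg₁ ht)
  obtain ⟨b, hb, eb⟩ := exists_RR hH0 hH hd₂ (g_gt hH0 hH hd₂ hg₂ ht)
  have h := lam_lt hH0 hH hd₁ hd hg₁ hg₂ ha
  rw [ea, (hg₁ t (le_of_lt ht)).2, ← (hg₂ t (le_of_lt ht)).2] at h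
  have h3 : eta H d₂ ≤ RR H d₂ a := by
    rw [eta_eq hH0 hH hd₂]; exact (RR_strictMono hH0 hd₂).monotone ha.le
  rw [(lam_mono hH0 hH hd₂ hg₂).lt_iff_lt (hg₂ t (le_of_lt ht)).1 h3, ← eb,
    (RR_strictMono hH0 hd₂).lt_iff_lt] at h
  rw [← ea, ← eb, ff_RR hH0 hd₁, ff_RR hH0 hd₂, inv_inv, inv_inv]
  exact sub_neg.2 (phi_lt hH0 hH hb h)

/-- `g₁, g₂` encode the inverses `λ_{d₁}^{-1}, λ_{d₂}^{-1} : [0, ∞) → [η_d, ∞)`, and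
`b_{d_i}(t) = λ_{d_i}^{-1}(|t|) = gᵢ |t|`. -/
theorem stmt_17 (H d₁ d₂ : ℝ) (hH0 : 0 < H) (hH : H < 1 / 2)
    (hd₁ : 2 < d₁) (hd : d₁ < d₂) (g₁ g₂ : ℝ → ℝ)
    (hg₁ : ∀ t : ℝ, 0 ≤ t → eta H d₁ ≤ g₁ t ∧ lam H d₁ (g₁ t) = t)
    (hg₂ : ∀ t : ℝ, 0 ≤ t → eta H d₂ ≤ g₂ t ∧ lam H d₂ (g₂ t) = t) :
    StrictAntiOn (fun t : ℝ => g₂ |t| - g₁ |t|) (Set.Ioi 0) ∧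
    StrictMonoOn (fun t : ℝ => g₂ |t| - g₁ |t|) (Set.Iio 0) ∧
    (∀ t : ℝ, g₂ |t| - g₁ |t| ≤ g₂ 0 - g₁ 0) ∧
    g₂ 0 - g₁ 0 = eta H d₂ - eta H d₁ := by
  have hd1 : 0 < d₁ := by linarith
  have hA := diff_anti hH0 hH hd1 hd hg₁ hg₂
  refine ⟨?_, ?_, ?_, ?_⟩
  · intro s hs t ht hst
    rw [Set.mem_Ioi] at hs ht
    simp only [abs_of_pos hs, abs_of_pos ht]
    exact hA hs.le ht.le hst
  · intro s hs t ht hst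
    rw [Set.mem_Iio] at hs ht
    exact hA (abs_nonneg t) (abs_nonneg s) (by rw [abs_of_neg hs, abs_of_neg ht]; linarith)
  · intro t
    exact hA.antitoneOn Set.self_mem_Ici (abs_nonneg t) (abs_nonneg t)
  · rw [g_zero hH0 hH hd1 hg₁, g_zero hH0 hH (hd1.trans hd) hg₂]
end

section
/- Fix H ∈ (0, 1/2) and let 2 < d₁ < d₂. There exists at most one t₀ > 0 such that λ_{d₂}^{-1}(t₀) − λ_{d₁}^{-1}(t₀) = 0; that is, the function t ↦ λ_{d₂}^{-1}(t) − λ_{d₁}^{-1}(t) has at most one zero on (0, ∞). -/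
open MeasureTheory

lemma aux_cosh_gt {C r : ℝ} (hC : 1 ≤ C) (hr : arcosh C < r) : C < Real.cosh r := by
  have h1 : arcosh C = Real.arcosh C := by simp [arcosh, Real.arcosh]
  rw [h1] at hr
  have h0 : 0 ≤ Real.arcosh C := Real.arcosh_nonneg hC
  have := Real.cosh_lt_cosh.2 (show |Real.arcosh C| < |r| by
    rw [abs_of_nonneg h0, abs_of_nonneg (h0.trans hr.le)]; exact hr)
  rwa [Real.cosh_arcosh hC] at this

lemma aux_pos {H d r : ℝ} (hH0 : 0 < H) (hH : H < 1 / 2) (hd : 2 < d) (hr : eta H d < r) :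
    (d + 2 * H * Real.cosh r) ^ 2 < Real.sinh r ^ 2 := by
  have hk : 0 < 1 - 4 * H ^ 2 := by nlinarith
  have hs : d < Real.sqrt (1 - 4 * H ^ 2 + d ^ 2) := by
    apply Real.lt_sqrt_of_sq_lt; linarith
  have hss := Real.sq_sqrt (show 0 ≤ 1 - 4 * H ^ 2 + d ^ 2 by positivity)
  set s := Real.sqrt (1 - 4 * H ^ 2 + d ^ 2) with hsdef
  have hdH : 0 < d * H := by positivity
  have hC : 1 ≤ (2 * d * H + s) / (1 - 4 * H ^ 2) := by
    rw [le_div_iff₀ hk]; nlinarith [sq_nonneg H]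
  have hc := aux_cosh_gt hC hr
  rw [div_lt_iff₀ hk] at hc
  rw [Real.sinh_sq]
  set c := Real.cosh r
  have h2 : s < c * (1 - 4 * H ^ 2) - 2 * d * H := by linarith
  have h3 : s ^ 2 < (c * (1 - 4 * H ^ 2) - 2 * d * H) ^ 2 := by
    apply pow_lt_pow_left₀ h2 (by linarith) (by norm_num)
  rw [hss] at h3
  have h4 : 0 < (1 - 4 * H ^ 2) * (c ^ 2 - 1 - (d + 2 * H * c) ^ 2) := by nlinarith
  have := (mul_pos_iff_of_pos_left hk).1 h4
  linarith

lemma aux_int {H d ρ t : ℝ} (ht : 0 < t) (h : lam H d ρ = t) :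
    IntervalIntegrable (fun r => (d + 2 * H * Real.cosh r) /
      Real.sqrt (Real.sinh r ^ 2 - (d + 2 * H * Real.cosh r) ^ 2)) volume (eta H d) ρ := by
  by_contra hn
  have := intervalIntegral.integral_undef hn
  unfold lam at h
  linarith

lemma aux_mono {H d₁ d₂ r : ℝ} (hH0 : 0 < H) (hH : H < 1 / 2)
    (hd₁ : 2 < d₁) (hd : d₁ < d₂) (hr : eta H d₂ < r) :
    (d₁ + 2 * H * Real.cosh r) /
      Real.sqrt (Real.sinh r ^ 2 - (d₁ + 2 * H * Real.cosh r) ^ 2) <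
    (d₂ + 2 * H * Real.cosh r) /
      Real.sqrt (Real.sinh r ^ 2 - (d₂ + 2 * H * Real.cosh r) ^ 2) := by
  have h := aux_pos hH0 hH (hd₁.trans hd) hr
  have hc : 0 < 2 * H * Real.cosh r := by have := Real.cosh_pos r; positivity
  have h2 : (d₁ + 2 * H * Real.cosh r) ^ 2 < (d₂ + 2 * H * Real.cosh r) ^ 2 :=
    pow_lt_pow_left₀ (by linarith) (by linarith) (by norm_num)
  apply div_lt_div₀ (by linarith) (Real.sqrt_le_sqrt (by linarith)) (by linarith)
    (Real.sqrt_pos.2 (by linarith))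

lemma aux_main {H d₁ d₂ ρ ρ' t t' : ℝ} (hH0 : 0 < H) (hH : H < 1 / 2)
    (hd₁ : 2 < d₁) (hd : d₁ < d₂) (ht : 0 < t) (ht' : 0 < t')
    (h1 : lam H d₁ ρ = t) (h1' : lam H d₁ ρ' = t')
    (h2 : lam H d₂ ρ = t) (h2' : lam H d₂ ρ' = t') (he : eta H d₂ ≤ ρ) (hlt : ρ < ρ') :
    False := by
  have i1 := aux_int ht h1
  have i1' := aux_int ht' h1'
  have i2 := aux_int ht h2
  have i2' := aux_int ht' h2'
  have j1 := i1.symm.trans i1'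
  have j2 := i2.symm.trans i2'
  have e1 := intervalIntegral.integral_interval_sub_left i1' i1
  have e2 := intervalIntegral.integral_interval_sub_left i2' i2
  have hp := intervalIntegral.intervalIntegral_pos_of_pos_on (j2.sub j1)
    (fun x hx => sub_pos.2 (aux_mono hH0 hH hd₁ hd (he.trans_lt hx.1))) hlt
  rw [intervalIntegral.integral_sub j2 j1] at hp
  unfold lam at h1 h1' h2 h2'
  linarith

/-- `g₁, g₂` encode the inverses `λ_{d₁}^{-1}, λ_{d₂}^{-1} : [0, ∞) → [η_d, ∞)`.  The function
`t ↦ λ_{d₂}^{-1}(t) − λ_{d₁}^{-1}(t)` has at most one zero on `(0, ∞)`. -/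
theorem stmt_19 (H d₁ d₂ : ℝ) (hH0 : 0 < H) (hH : H < 1 / 2)
    (hd₁ : 2 < d₁) (hd : d₁ < d₂) (g₁ g₂ : ℝ → ℝ)
    (hg₁ : ∀ t : ℝ, 0 ≤ t → eta H d₁ ≤ g₁ t ∧ lam H d₁ (g₁ t) = t)
    (hg₂ : ∀ t : ℝ, 0 ≤ t → eta H d₂ ≤ g₂ t ∧ lam H d₂ (g₂ t) = t) :
    ∀ t t' : ℝ, 0 < t → 0 < t' →
      g₂ t - g₁ t = 0 → g₂ t' - g₁ t' = 0 → t = t' := by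
  intro t t' ht ht' h h'
  have e : g₁ t = g₂ t := by linarith
  have e' : g₁ t' = g₂ t' := by linarith
  have a := (hg₁ t ht.le).2
  have a' := (hg₁ t' ht'.le).2
  obtain ⟨b, c⟩ := hg₂ t ht.le
  obtain ⟨b', c'⟩ := hg₂ t' ht'.le
  rw [e] at a
  rw [e'] at a'
  rcases lt_trichotomy (g₂ t) (g₂ t') with hl | hl | hl
  · exact (aux_main hH0 hH hd₁ hd ht ht' a a' c c' b hl).elim
  · rw [← c, ← c', hl]
  · exact (aux_main hH0 hH hd₁ hd ht' ht a' a c' c b' hl).elim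
end
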